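/- arXiv:2011.13578 — 2 statements merged into one kernel-verified Lean document; each statement's English description precedes it below -/
import Mathlib

section
/- Let n ≥ 3 be odd and f_0 a nonzero odd integer with squarefree part k. Let F ∈ F_n^{r_1,r_2}(f_0,ℤ) be primitive and suppose that R_F ⊗_ℤ ℤ_p is the maximal order (the integral closure of ℤ_p) in K_F ⊗_ℚ ℚ_p for every prime p dividing f_0, and that F is squareful over ℤ_p for every prime p dividing k. Then the class of the fractional ideal I_F^{n-2} — which equals the class of the inverse different of R_F — is a square in the ideal class group Cl(R_F). -/
open Polynomial Matrix MeasureTheory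
open scoped Classical
noncomputable section
namespace BHS



/-! ### Binary forms and the rings they cut out, over a general base -/

variable (R K : Type) [CommRing R] [Field K] [Algebra R K]

/-- The one-variable polynomial `F(x,1)` of the binary form of degree `n` with
coefficient vector `c` (so `F(x,z) = ∑ c i · x^(n-i) · z^i`), over `K`. -/
def binPoly (n : ℕ) (c : ℕ → R) : Polynomial K :=
  ∑ i ∈ Finset.range (n + 1), Polynomial.C (algebraMap R K (c i)) * Polynomial.X ^ (n - i)

/-- The étale algebra `K_F = K[x]/(F(x,1))`. -/
abbrev KF (n : ℕ) (c : ℕ → R) : Type := AdjoinRoot (binPoly R K n c)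

/-- θ, the image of x in K_F. -/
def θF (n : ℕ) (c : ℕ → R) : KF R K n c := AdjoinRoot.root _

/-- `ζ_i = ∑_{j<i} f_j θ^{i-j}`. -/
def ζF (n : ℕ) (c : ℕ → R) (i : ℕ) : KF R K n c :=
  ∑ j ∈ Finset.range i, algebraMap R (KF R K n c) (c j) * θF R K n c ^ (i - j)

/-- The ring `R_F`, as the free `R`-submodule of `K_F` with basis `1, ζ_1, …, ζ_{n-1}`
(a subring by Nakagawa's theorem). -/
def RFmod (n : ℕ) (c : ℕ → R) : Submodule R (KF R K n c) :=
  Submodule.span R ({1} ∪ {x | ∃ i, 1 ≤ i ∧ i ≤ n - 1 ∧ x = ζF R K n c i})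

/-- The fractional ideal `I_F^k`, as the free `R`-submodule of `K_F` with basis
`1, θ, …, θ^k, ζ_{k+1}, …, ζ_{n-1}`. -/
def IFmod (n : ℕ) (c : ℕ → R) (k : ℕ) : Submodule R (KF R K n c) :=
  Submodule.span R ({x | ∃ j ≤ k, x = θF R K n c ^ j} ∪
    {x | ∃ i, k + 1 ≤ i ∧ i ≤ n - 1 ∧ x = ζF R K n c i})

/-- `R_F` is the maximal order (the integral closure of `R`) in `K_F`. -/
def IsMaxOrder (n : ℕ) (c : ℕ → R) : Prop :=
  RFmod R K n c = Subalgebra.toSubmodule (integralClosure R (KF R K n c))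

/-- `M` is stable under multiplication by `R_F`, i.e. `M` is an `R_F`-submodule of `K_F`. -/
def IsStable (n : ℕ) (c : ℕ → R) (M : Submodule R (KF R K n c)) : Prop :=
  ∀ ρ ∈ RFmod R K n c, ∀ x ∈ M, ρ * x ∈ M

/-- `M` is an invertible fractional ideal of `R_F`. -/
def IsInvIdeal (n : ℕ) (c : ℕ → R) (M : Submodule R (KF R K n c)) : Prop :=
  IsStable R K n c M ∧
    ∃ N : Submodule R (KF R K n c), IsStable R K n c N ∧ M * N = RFmod R K n c

/-- The principal fractional ideal of `R_F` generated by `α`. -/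
def principal (n : ℕ) (c : ℕ → R) (α : KF R K n c) : Submodule R (KF R K n c) :=
  Submodule.span R {α} * RFmod R K n c

/-- `ρ` is a unit of the order `R_F`. -/
def IsUnitRF (n : ℕ) (c : ℕ → R) (ρ : KF R K n c) : Prop :=
  ρ ∈ RFmod R K n c ∧ ∃ σ ∈ RFmod R K n c, ρ * σ = 1

/-- `#R_F^×[2]`, the number of 2-torsion units of `R_F`. -/
def twoTorsUnitsCount (n : ℕ) (c : ℕ → R) : ℕ :=
  Nat.card {ρ : KF R K n c // ρ ∈ RFmod R K n c ∧ ρ ^ 2 = 1}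

/-- The number of 2-torsion elements of the ideal class group `Cl(R_F)`: the number of
invertible fractional ideals of `R_F` whose square is principal, counted modulo
principal fractional ideals. -/
def clTwoCount (n : ℕ) (c : ℕ → R) : ℕ :=
  Nat.card (Quot (fun (I J : {M : Submodule R (KF R K n c) //
      IsInvIdeal R K n c M ∧
        ∃ α : KF R K n c, IsUnit α ∧ M * M = principal R K n c α}) =>
    ∃ α : KF R K n c, IsUnit α ∧
      (I : Submodule R (KF R K n c)) =
        Submodule.span R {α} * (J : Submodule R (KF R K n c))))

/-- `α ∈ K_F` is totally positive: positive under every real embedding. -/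
def TotPos (n : ℕ) (c : ℕ → R) (α : KF R K n c) : Prop :=
  ∀ φ : KF R K n c →+* ℝ, 0 < φ α

/-- The number of 2-torsion elements of the narrow class group `Cl⁺(R_F)`. -/
def clTwoCountPlus (n : ℕ) (c : ℕ → R) : ℕ :=
  Nat.card (Quot (fun (I J : {M : Submodule R (KF R K n c) //
      IsInvIdeal R K n c M ∧
        ∃ α : KF R K n c, IsUnit α ∧ TotPos R K n c α ∧ M * M = principal R K n c α}) =>
    ∃ α : KF R K n c, IsUnit α ∧ TotPos R K n c α ∧
      (I : Submodule R (KF R K n c)) =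
        Submodule.span R {α} * (J : Submodule R (KF R K n c))))

/-- The order of the ideal class group of `R_F`. -/
def clCount (n : ℕ) (c : ℕ → R) : ℕ :=
  Nat.card (Quot (fun (I J : {M : Submodule R (KF R K n c) // IsInvIdeal R K n c M}) =>
    ∃ α : KF R K n c, IsUnit α ∧
      (I : Submodule R (KF R K n c)) =
        Submodule.span R {α} * (J : Submodule R (KF R K n c))))

/-- The order of the narrow class group of `R_F`. -/
def clCountPlus (n : ℕ) (c : ℕ → R) : ℕ :=
  Nat.card (Quot (fun (I J : {M : Submodule R (KF R K n c) // IsInvIdeal R K n c M}) =>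
    ∃ α : KF R K n c, IsUnit α ∧ TotPos R K n c α ∧
      (I : Submodule R (KF R K n c)) =
        Submodule.span R {α} * (J : Submodule R (KF R K n c))))


/-! ### The group G_n and pairs of symmetric matrices -/

/-- `G_n(S)`: `SL_n(S)` when `n` is odd, `SL_n^±(S)` when `n` is even. -/
def GnSet (S : Type) [CommRing S] (n : ℕ) : Set (Matrix (Fin n) (Fin n) S) :=
  {g | if Odd n then g.det = 1 else g.det = 1 ∨ g.det = -1}

/-- `(A', B')` is in the `G_n(S)`-orbit of `(A, B)` under `g·(A,B) = (gAgᵀ, gBgᵀ)`. -/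
def SameOrbit (S : Type) [CommRing S] (n : ℕ)
    (A B A' B' : Matrix (Fin n) (Fin n) S) : Prop :=
  ∃ g ∈ GnSet S n, A' = g * A * gᵀ ∧ B' = g * B * gᵀ

/-- The binary form `inv(x·A + z·B) = (-1)^⌊n/2⌋ det(x·A + z·B)`, as a polynomial
in the two variables `x = X 0`, `z = X 1`. -/
def invForm (S : Type) [CommRing S] (n : ℕ) (A B : Matrix (Fin n) (Fin n) S) :
    MvPolynomial (Fin 2) S :=
  (-1) ^ (n / 2) *
    Matrix.det (Matrix.of fun i j =>
      MvPolynomial.X 0 * MvPolynomial.C (A i j) + MvPolynomial.X 1 * MvPolynomial.C (B i j))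

/-- Coefficients of the monicized form `F_mon(x,z) = F(x, f_0·z)/f_0`. -/
def monC (S : Type) [CommRing S] (c : ℕ → S) (i : ℕ) : S :=
  if i = 0 then 1 else c i * c 0 ^ (i - 1)

/-- The binary form of degree `n` with coefficient vector `c`, as a polynomial in the
two variables `x = X 0`, `z = X 1`. -/
def mvForm (S : Type) [CommRing S] (n : ℕ) (c : ℕ → S) : MvPolynomial (Fin 2) S :=
  ∑ i ∈ Finset.range (n + 1),
    MvPolynomial.C (c i) * MvPolynomial.X 0 ^ (n - i) * MvPolynomial.X 1 ^ i

/-- The identity `inv(x·A + z·B) = r · F_mon(x,z)` of binary forms of degree `n`. -/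
def InvEq (S : Type) [CommRing S] (n : ℕ) (c : ℕ → S) (r : S)
    (A B : Matrix (Fin n) (Fin n) S) : Prop :=
  invForm S n A B = MvPolynomial.C r * mvForm S n (monC S c)




/-! ### p-adic machinery -/

variable (p : ℕ) [Fact p.Prime]

instance : MeasurableSpace ℤ_[p] := borel _
instance : BorelSpace ℤ_[p] := ⟨rfl⟩

/-- Haar probability measure on `ℤ_p^n`. -/
def haarP (n : ℕ) : Measure (Fin n → ℤ_[p]) :=
  Measure.addHaarMeasure ⟨⟨Set.univ, isCompact_univ⟩, by rw [interior_univ]; exact Set.univ_nonempty⟩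

/-- The `p`-adic density of `A` within `B` (subsets of the coefficient space `ℤ_p^n`). -/
def densIn (n : ℕ) (A B : Set (Fin n → ℤ_[p])) : ℝ :=
  (haarP p n A).toReal / (haarP p n B).toReal

/-- The coefficient vector of the degree-`n` binary form with leading coefficient `f0` and
remaining coefficients `v`. -/
def consF0 (n : ℕ) (f0 : ℤ_[p]) (v : Fin n → ℤ_[p]) : ℕ → ℤ_[p] :=
  fun j => if j = 0 then f0 else if h : j - 1 < n then v ⟨j - 1, h⟩ else 0

/-- The reduction of the binary form with coefficients `c` modulo `p`, as a polynomial in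
two variables `x = X 0`, `z = X 1` over `F_p`. -/
def redForm (n : ℕ) (c : ℕ → ℤ_[p]) : MvPolynomial (Fin 2) (ZMod p) :=
  ∑ i ∈ Finset.range (n + 1),
    MvPolynomial.C (PadicInt.toZMod (c i)) * MvPolynomial.X 0 ^ (n - i) * MvPolynomial.X 1 ^ i

/-- `F` is squareful over `ℤ_p`: `F ≡ κ·z^{e}·H² (mod p)` with `e > 0`, `κ ∈ F_p^×` and
`H` a monic binary form over `F_p` (hence not divisible by `z`). -/
def SquarefulP (n : ℕ) (c : ℕ → ℤ_[p]) : Prop :=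
  ∃ (κ : (ZMod p)ˣ) (e d : ℕ) (H : MvPolynomial (Fin 2) (ZMod p)),
    0 < e ∧ H.IsHomogeneous d ∧ MvPolynomial.coeff (Finsupp.single 0 d) H = 1 ∧
    redForm p n c = MvPolynomial.C (κ : ZMod p) * MvPolynomial.X 1 ^ e * H ^ 2

/-- `F` is evenly ramified over `ℤ_p`: `F ≡ κ·H² (mod p)` with `κ ∈ F_p^×`. -/
def EvenRamP (n : ℕ) (c : ℕ → ℤ_[p]) : Prop :=
  ∃ (κ : (ZMod p)ˣ) (H : MvPolynomial (Fin 2) (ZMod p)),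
    redForm p n c = MvPolynomial.C (κ : ZMod p) * H ^ 2

/-- `F` is primitive over `ℤ_p`: its coefficients generate the unit ideal. -/
def PrimP (n : ℕ) (c : ℕ → ℤ_[p]) : Prop := ∃ i ≤ n, IsUnit (c i)

/-- `F` is separable (of degree `n`) over `ℚ_p`. -/
def SepDegP (n : ℕ) (c : ℕ → ℤ_[p]) : Prop :=
  (binPoly ℤ_[p] ℚ_[p] n c).Separable ∧ (binPoly ℤ_[p] ℚ_[p] n c).natDegree = n

/-- The determinant of the Sylvester matrix of `F(x,1)` (of formal degree n) and
`F'(x,1)` (of formal degree n-1); it equals `±f_0` times the discriminant of the form. -/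
def sylvDet (S : Type) [CommRing S] (n : ℕ) (c : ℕ → S) : S :=
  Matrix.det (Matrix.of (fun (i j : Fin (n + (n - 1))) =>
    if (i : ℕ) < n - 1 then
      (if (i : ℕ) ≤ (j : ℕ) ∧ (j : ℕ) ≤ (i : ℕ) + n then c ((j : ℕ) - (i : ℕ)) else 0)
    else
      (if (i : ℕ) - (n - 1) ≤ (j : ℕ) ∧ (j : ℕ) ≤ ((i : ℕ) - (n - 1)) + (n - 1) then
        ((n - ((j : ℕ) - ((i : ℕ) - (n - 1))) : ℕ) : S) * c ((j : ℕ) - ((i : ℕ) - (n - 1)))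
      else 0)))

/-- The discriminant of the form with coefficients `c` is not divisible by `p²`. -/
def DiscOK (n : ℕ) (c : ℕ → ℤ_[p]) : Prop :=
  ¬ ((p : ℤ_[p]) ^ 2 * c 0 ∣ sylvDet ℤ_[p] n c)

/-- The reduction modulo `p` of the degree-`n` binary form with coefficients `c` is a
separable binary form over `F_p`. -/
def SepFormModP (n : ℕ) (c : ℕ → ℤ_[p]) : Prop :=
  (∑ i ∈ Finset.range (n + 1),
      Polynomial.C (PadicInt.toZMod (c i)) * (Polynomial.X : Polynomial (ZMod p)) ^ (n - i)).Separable ∧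
  n - 1 ≤ (∑ i ∈ Finset.range (n + 1),
      Polynomial.C (PadicInt.toZMod (c i)) * (Polynomial.X : Polynomial (ZMod p)) ^ (n - i)).natDegree



/-! ### Integral binary forms, heights, and averages -/

/-- Extend a coefficient vector `Fin (n+1) → ℤ` to `ℕ → ℤ` by zero. -/
def fpad (n : ℕ) (f : Fin (n + 1) → ℤ) : ℕ → ℤ :=
  fun j => if h : j < n + 1 then f ⟨j, h⟩ else 0

/-- Cast an integral coefficient vector to `ℤ_p`. -/
def castP (p : ℕ) [Fact p.Prime] (c : ℕ → ℤ) : ℕ → ℤ_[p] := fun j => (c j : ℤ_[p])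

/-- `F` has nonzero discriminant (is separable of degree `n` over `ℝ`) and splits over `ℝ`
into `r1` linear and `(n - r1)/2` irreducible quadratic factors. -/
def SepSig (n r1 : ℕ) (f : Fin (n + 1) → ℤ) : Prop :=
  (binPoly ℤ ℝ n (fpad n f)).Separable ∧ (binPoly ℤ ℝ n (fpad n f)).natDegree = n ∧
    (binPoly ℤ ℝ n (fpad n f)).roots.card = r1

/-- `F` is primitive: its coefficients generate the unit ideal of `ℤ`. -/
def PrimZ (n : ℕ) (f : Fin (n + 1) → ℤ) : Prop := IsUnit (Finset.univ.gcd f)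

/-- The family `F_n^{r1,r2}(f0, ℤ)`. -/
def FnSig (n : ℕ) (f0 : ℤ) (r1 : ℕ) : Set (Fin (n + 1) → ℤ) :=
  {f | f 0 = f0 ∧ SepSig n r1 f}

/-- The family `F_{n,max}^{r1,r2}(f0, ℤ)`. -/
def FnMax (n : ℕ) (f0 : ℤ) (r1 : ℕ) : Set (Fin (n + 1) → ℤ) :=
  {f | f ∈ FnSig n f0 r1 ∧ PrimZ n f ∧ IsMaxOrder ℤ ℚ n (fpad n f)}

/-- Coefficients `f̃_i` of the unique real unipotent translate of the monicized form having
vanishing `x^{n-1}z`-coefficient. -/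
def tildeC (n : ℕ) (f : Fin (n + 1) → ℤ) (i : ℕ) : ℝ :=
  ∑ j ∈ Finset.range (i + 1),
    (monC ℤ (fpad n f) j : ℝ) * ((n - j).choose (i - j) : ℝ) *
      (-(monC ℤ (fpad n f) 1 : ℝ) / n) ^ (i - j)

/-- The height `H(F) = max_{2 ≤ i ≤ n} |f̃_i|^{1/i}`. -/
def heightZ (n : ℕ) (f : Fin (n + 1) → ℤ) : ℝ :=
  ⨆ i : (Finset.Icc 2 n : Finset ℕ), |tildeC n f i| ^ (((i : ℕ) : ℝ))⁻¹

/-- Canonical representatives for the `M_1(ℤ)`-classes in the family `𝓕` of height `< X`: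
each class contains a unique form whose `x^{n-1}z`-coefficient lies in `[0, n·|f0|)`. -/
def repSet (n : ℕ) (f0 : ℤ) (𝓕 : Set (Fin (n + 1) → ℤ)) (X : ℝ) : Set (Fin (n + 1) → ℤ) :=
  {f | f ∈ 𝓕 ∧ heightZ n f < X ∧ 0 ≤ f 1 ∧ f 1 < n * |f0|}

/-- The ratio `(∑_{F} φ(F)) / (∑_{F} 1)` over `M_1(ℤ)`-classes of forms in `𝓕` of
height `< X`. -/
def avgRatio (n : ℕ) (f0 : ℤ) (𝓕 : Set (Fin (n + 1) → ℤ)) (φ : (Fin (n + 1) → ℤ) → ℕ)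
    (X : ℝ) : ℝ :=
  ((∑' g : repSet n f0 𝓕 X, (φ g : ENNReal)) / (∑' _g : repSet n f0 𝓕 X, (1 : ENNReal))).toReal

/-- `Avg_{F ∈ 𝓕} φ(F) ≤ a`. -/
def AvgLE (n : ℕ) (f0 : ℤ) (𝓕 : Set (Fin (n + 1) → ℤ)) (φ : (Fin (n + 1) → ℤ) → ℕ)
    (a : ℝ) : Prop :=
  Filter.limsup (avgRatio n f0 𝓕 φ) Filter.atTop ≤ a

/-- `Avg_{F ∈ 𝓕} φ(F) = a` (the limit exists and equals `a`). -/
def AvgEq (n : ℕ) (f0 : ℤ) (𝓕 : Set (Fin (n + 1) → ℤ)) (φ : (Fin (n + 1) → ℤ) → ℕ)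
    (a : ℝ) : Prop :=
  Filter.Tendsto (avgRatio n f0 𝓕 φ) Filter.atTop (nhds a)

/-! ### Families of local specifications -/

instance instPrimesFact (q : Nat.Primes) : Fact (q : ℕ).Prime := ⟨q.2⟩

/-- The `M_1`-action on coefficient vectors: the coefficients of `F((x,z)·γ) = F(x + sz, z)`. -/
def m1actC (S : Type) [CommRing S] (n : ℕ) (s : S) (c : ℕ → S) : ℕ → S :=
  fun i => ∑ j ∈ Finset.range (i + 1), c j * ((n - j).choose (i - j) : S) * s ^ (i - j)

/-- A family of local specifications `Σ = (Σ_p)_p` (with `Σ_∞` given by a signature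
condition, recorded separately): for each prime `p`, a nonempty `M_1(ℤ_p)`-invariant open
subset of the separable primitive forms of degree `n` with leading coefficient `f0`
(identified with their non-leading coefficient vectors in `ℤ_p^n`), whose boundary has
measure `0`. -/
structure LocalSpecs (n : ℕ) (f0 : ℤ) : Type where
  sig : ∀ q : Nat.Primes, Set (Fin n → ℤ_[(q : ℕ)])
  nonempty' : ∀ q : Nat.Primes, (sig q).Nonempty
  isOpen' : ∀ q : Nat.Primes, IsOpen (sig q)
  m1inv : ∀ q : Nat.Primes, ∀ s : ℤ_[(q : ℕ)], ∀ v ∈ sig q,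
    (fun i : Fin n =>
      m1actC ℤ_[(q : ℕ)] n s (consF0 (q : ℕ) n ((f0 : ℤ) : ℤ_[(q : ℕ)]) v) ((i : ℕ) + 1)) ∈ sig q
  boundary : ∀ q : Nat.Primes, haarP (q : ℕ) n (frontier (sig q)) = 0
  sep : ∀ q : Nat.Primes, ∀ v ∈ sig q, SepDegP (q : ℕ) n (consF0 (q : ℕ) n ((f0 : ℤ) : ℤ_[(q : ℕ)]) v)
  prim : ∀ q : Nat.Primes, ∀ v ∈ sig q, PrimP (q : ℕ) n (consF0 (q : ℕ) n ((f0 : ℤ) : ℤ_[(q : ℕ)]) v)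

/-- `F` satisfies all the local specifications at finite places. -/
def memSig (n : ℕ) (f0 : ℤ) (L : LocalSpecs n f0) (f : Fin (n + 1) → ℤ) : Prop :=
  ∀ q : Nat.Primes, (fun i : Fin n => ((f i.succ : ℤ) : ℤ_[(q : ℕ)])) ∈ L.sig q

/-- The family `F_n(f0, Σ)` cut out by the local specifications `Σ` (with
`Σ_∞ = F_n^{r1,r2}(f0,ℝ)`). -/
def FnSigma (n : ℕ) (f0 : ℤ) (r1 : ℕ) (L : LocalSpecs n f0) : Set (Fin (n + 1) → ℤ) :=
  {f | f ∈ FnSig n f0 r1 ∧ memSig n f0 L f}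

/-- `Σ` is acceptable: for all sufficiently large primes `p`, `Σ_p` contains all separable
primitive forms whose discriminant is not divisible by `p²`. -/
def Acceptable (n : ℕ) (f0 : ℤ) (L : LocalSpecs n f0) : Prop :=
  ∃ N : ℕ, ∀ q : Nat.Primes, N < (q : ℕ) → ∀ v : Fin n → ℤ_[(q : ℕ)],
    SepDegP (q : ℕ) n (consF0 (q : ℕ) n ((f0 : ℤ) : ℤ_[(q : ℕ)]) v) →
    PrimP (q : ℕ) n (consF0 (q : ℕ) n ((f0 : ℤ) : ℤ_[(q : ℕ)]) v) →
    DiscOK (q : ℕ) n (consF0 (q : ℕ) n ((f0 : ℤ) : ℤ_[(q : ℕ)]) v) →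
    v ∈ L.sig q

/-- The squareful density `r_p(Σ)` (for odd `n`). -/
def rpOdd (n : ℕ) (f0 : ℤ) (L : LocalSpecs n f0) (q : Nat.Primes) : ℝ :=
  densIn (q : ℕ) n
    {v ∈ L.sig q | SquarefulP (q : ℕ) n (consF0 (q : ℕ) n ((f0 : ℤ) : ℤ_[(q : ℕ)]) v)}
    (L.sig q)

/-- The evenly-ramified density `r_p(Σ)` (for even `n`). -/
def rpEven (n : ℕ) (f0 : ℤ) (L : LocalSpecs n f0) (q : Nat.Primes) : ℝ :=
  densIn (q : ℕ) n
    {v ∈ L.sig q | EvenRamP (q : ℕ) n (consF0 (q : ℕ) n ((f0 : ℤ) : ℤ_[(q : ℕ)]) v)}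
    (L.sig q)

def two' : Nat.Primes := ⟨2, Nat.prime_two⟩

/-- A nice family of local specifications, for odd `n`: acceptable, with
`Σ_2 ⊆ F_{n,max}(f0, ℤ_2)`. -/
def NiceOdd (n : ℕ) (f0 : ℤ) (L : LocalSpecs n f0) : Prop :=
  Acceptable n f0 L ∧
    ∀ v ∈ L.sig two', IsMaxOrder ℤ_[2] ℚ_[2] n (consF0 2 n ((f0 : ℤ) : ℤ_[2]) v)

/-- The form over `F_2` with leading coefficient `1` and remaining coefficients `w`
is separable. -/
def SepF2 (n : ℕ) (w : Fin n → ZMod 2) : Prop :=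
  (∑ i ∈ Finset.range (n + 1),
      Polynomial.C (if h : i = 0 then 1 else if h2 : i - 1 < n then w ⟨i - 1, h2⟩ else 0) *
        (Polynomial.X : Polynomial (ZMod 2)) ^ (n - i)).Separable

/-- A nice family of local specifications, for even `n`: acceptable, `Σ_2` is the full
preimage inside `F_{n,max}(f0, ℤ_2)` under reduction modulo 2 of a set of separable forms
over `F_2`, and `r_p(Σ) = 0` for all sufficiently large `p`. -/
def NiceEven (n : ℕ) (f0 : ℤ) (L : LocalSpecs n f0) : Prop :=
  Acceptable n f0 L ∧
  (∃ T : Set (Fin n → ZMod 2), (∀ w ∈ T, SepF2 n w) ∧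
    L.sig two' = {v | SepDegP 2 n (consF0 2 n ((f0 : ℤ) : ℤ_[2]) v) ∧
      PrimP 2 n (consF0 2 n ((f0 : ℤ) : ℤ_[2]) v) ∧
      IsMaxOrder ℤ_[2] ℚ_[2] n (consF0 2 n ((f0 : ℤ) : ℤ_[2]) v) ∧
      (fun i : Fin n => PadicInt.toZMod (v i)) ∈ T}) ∧
  (∃ N : ℕ, ∀ q : Nat.Primes, N < (q : ℕ) → rpEven n f0 L q = 0)


set_option linter.unusedSectionVars false
set_option linter.unusedVariables false

/-! ### Auxiliary development: the order and its ideals in an abstract setting -/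

section Aux

variable {S O L : Type} [CommRing S] [CommRing O] [CommRing L] [Algebra S O] [Algebra O L]
  [Algebra S L] [IsScalarTower S O L]

/-- abstract `ζ_i`. -/
def zt (c : ℕ → S) (θ : L) (i : ℕ) : L :=
  ∑ j ∈ Finset.range i, algebraMap S L (c j) * θ ^ (i - j)

lemma zt_zero (c : ℕ → S) (θ : L) : zt c θ 0 = 0 := by simp [zt]

lemma zt_succ (c : ℕ → S) (θ : L) (i : ℕ) :
    zt c θ (i + 1) = (zt c θ i + algebraMap S L (c i)) * θ := by
  unfold zt
  rw [Finset.sum_range_succ, add_mul, Finset.sum_mul]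
  congr 1
  · refine Finset.sum_congr rfl fun j hj => ?_
    have : i + 1 - j = (i - j) + 1 := by have := Finset.mem_range.1 hj; omega
    rw [this, pow_succ]; ring
  · simp

lemma zt_one (c : ℕ → S) (θ : L) : zt c θ 1 = algebraMap S L (c 0) * θ := by
  rw [zt_succ, zt_zero, zero_add]

/-- `θ` is a root. -/
def RootOf (n : ℕ) (c : ℕ → S) (θ : L) : Prop :=
  ∑ i ∈ Finset.range (n + 1), algebraMap S L (c i) * θ ^ (n - i) = 0

lemma zt_n {n : ℕ} {c : ℕ → S} {θ : L} (h : RootOf n c θ) :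
    zt c θ n = - algebraMap S L (c n) := by
  unfold RootOf at h
  rw [Finset.sum_range_succ] at h
  simp only [Nat.sub_self, pow_zero, mul_one] at h
  exact eq_neg_of_add_eq_zero_left h

lemma one_mul_mem {M : Submodule O L} {x y : L} (hx : x ∈ (1 : Submodule O L)) (hy : y ∈ M) :
    x * y ∈ M := by
  have := Submodule.mul_mem_mul hx hy
  rwa [one_mul] at this

lemma alg_mem_one (s : S) : algebraMap S L s ∈ (1 : Submodule O L) := by
  rw [IsScalarTower.algebraMap_apply S O L]
  exact Submodule.algebraMap_mem _

lemma one_le_iff' {M : Submodule O L} : 1 ≤ M ↔ (1 : L) ∈ M := by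
  rw [Submodule.one_le]

variable (O) in
/-- inverse of `I_F`. -/
def AI (n : ℕ) (c : ℕ → S) (θ : L) : Submodule O L :=
  Submodule.span O {x | ∃ i < n, x = zt c θ i + algebraMap S L (c i)}

variable (O) in
/-- the ideal `I_F`. -/
def II (θ : L) : Submodule O L := Submodule.span O {1, θ}

variable (O) in
/-- `A + d`. -/
def Ad (n : ℕ) (c : ℕ → S) (θ : L) (d : S) : Submodule O L :=
  Submodule.span O {algebraMap S L d} + AI O n c θ

lemma mem_AI {n : ℕ} {c : ℕ → S} {θ : L} {i : ℕ} (hi : i < n) :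
    zt c θ i + algebraMap S L (c i) ∈ AI O n c θ := Submodule.subset_span ⟨i, hi, rfl⟩

lemma AI_le_Ad {n : ℕ} {c : ℕ → S} {θ : L} {d : S} : AI O n c θ ≤ Ad O n c θ d := by
  unfold Ad; rw [Submodule.add_eq_sup]; exact le_sup_right

lemma d_mem_Ad {n : ℕ} {c : ℕ → S} {θ : L} {d : S} : algebraMap S L d ∈ Ad O n c θ d := by
  unfold Ad; rw [Submodule.add_eq_sup]
  exact (le_sup_left : _ ≤ _ ⊔ AI O n c θ) (Submodule.mem_span_singleton_self _)

lemma c0_mem_AI {n : ℕ} {c : ℕ → S} {θ : L} (hn : 0 < n) :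
    algebraMap S L (c 0) ∈ AI O n c θ := by
  have := mem_AI (O := O) (c := c) (θ := θ) hn
  rwa [zt_zero, zero_add] at this

lemma AI_le_one {n : ℕ} {c : ℕ → S} {θ : L}
    (hz : ∀ i ≤ n, zt c θ i ∈ (1 : Submodule O L)) : AI O n c θ ≤ 1 := by
  unfold AI
  rw [Submodule.span_le]
  rintro _ ⟨i, hi, rfl⟩
  exact add_mem (hz i hi.le) (alg_mem_one _)

lemma Ad_le_one {n : ℕ} {c : ℕ → S} {θ : L} {d : S}
    (hz : ∀ i ≤ n, zt c θ i ∈ (1 : Submodule O L)) : Ad O n c θ d ≤ 1 := by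
  unfold Ad
  rw [Submodule.add_eq_sup]
  refine sup_le ?_ (AI_le_one hz)
  rw [Submodule.span_le, Set.singleton_subset_iff]
  exact alg_mem_one _

lemma zt_add_mem_AI {n : ℕ} {c : ℕ → S} {θ : L} (h : RootOf n c θ) {i : ℕ} (hi : i ≤ n) :
    zt c θ i + algebraMap S L (c i) ∈ AI O n c θ := by
  rcases hi.lt_or_eq with hi | rfl
  · exact mem_AI hi
  · rw [zt_n h, neg_add_cancel]; exact zero_mem _

lemma AI_mul_II {n : ℕ} (hn : 0 < n) {c : ℕ → S} {θ : L} (h : RootOf n c θ)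
    (hz : ∀ i ≤ n, zt c θ i ∈ (1 : Submodule O L))
    (g : ℕ → S) (hg : ∑ i ∈ Finset.range (n + 1), g i * c i = 1) :
    AI O n c θ * II O θ = 1 := by
  apply le_antisymm
  · unfold AI II
    rw [Submodule.span_mul_span, Submodule.span_le]
    rintro _ ⟨_, ⟨i, hi, rfl⟩, y, hy, rfl⟩
    rcases hy with rfl | rfl
    · simp only [mul_one]
      exact add_mem (hz i hi.le) (alg_mem_one _)
    · show _ * _ ∈ (1 : Submodule O L)
      rw [← zt_succ]
      exact hz _ hi
  · rw [one_le_iff']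
    have h1 : ∀ x ∈ AI O n c θ, x ∈ AI O n c θ * II O θ := fun x hx => by
      have := Submodule.mul_mem_mul hx (Submodule.subset_span (by simp) : (1 : L) ∈ II O θ)
      rwa [mul_one] at this
    have hθ : ∀ x ∈ AI O n c θ, x * θ ∈ AI O n c θ * II O θ := fun x hx =>
      Submodule.mul_mem_mul hx (Submodule.subset_span (by simp) : θ ∈ II O θ)
    have hc : ∀ i ≤ n, algebraMap S L (c i) ∈ AI O n c θ * II O θ := by
      intro i hi
      cases i with
      | zero => exact h1 _ (c0_mem_AI hn)
      | succ i =>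
        have e1 := hθ _ (mem_AI (c := c) hi)
        rw [← zt_succ] at e1
        have e2 := h1 _ (zt_add_mem_AI h hi)
        simpa using sub_mem e2 e1
    have : (1 : L) = ∑ i ∈ Finset.range (n + 1), algebraMap S L (g i) * algebraMap S L (c i) := by
      rw [← map_one (algebraMap S L), ← hg, map_sum]
      simp only [map_mul]
    rw [this]
    refine sum_mem fun i hi => ?_
    exact one_mul_mem (alg_mem_one _) (hc i (by have := Finset.mem_range.1 hi; omega))

lemma Ad_mul_Ad {n : ℕ} (hn : 2 ≤ n) {c : ℕ → S} {θ : L} (h : RootOf n c θ)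
    (hz : ∀ i ≤ n, zt c θ i ∈ (1 : Submodule O L)) {d d' : S} (hd : d * d' ∣ c 0)
    {x y t : S} (hxy : x * d + y * d' + t * c 1 = 1) :
    Ad O n c θ d * Ad O n c θ d' = Ad O n c θ (d * d') := by
  apply le_antisymm
  · have e : Ad O n c θ d * Ad O n c θ d' =
        Submodule.span O {algebraMap S L (d * d')} +
        (Ad O n c θ d * AI O n c θ + AI O n c θ * Submodule.span O {algebraMap S L d'}) := by
      unfold Ad
      rw [map_mul, ← Set.singleton_mul_singleton, ← Submodule.span_mul_span]
      ring
    rw [e]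
    conv_rhs => unfold Ad
    simp only [Submodule.add_eq_sup]
    refine sup_le_sup le_rfl (sup_le ?_ ?_)
    · calc _ ≤ 1 * AI O n c θ := mul_le_mul_left (Ad_le_one hz) _
        _ = _ := one_mul _
    · calc _ ≤ AI O n c θ * 1 := mul_le_mul_right (by
            rw [Submodule.span_le, Set.singleton_subset_iff]; exact alg_mem_one _) _
        _ = _ := mul_one _
  · set M := Ad O n c θ d * Ad O n c θ d' with hM
    have hdd : algebraMap S L (d * d') ∈ M := by
      rw [map_mul]; exact Submodule.mul_mem_mul d_mem_Ad d_mem_Ad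
    have hc0 : algebraMap S L (c 0) ∈ M := by
      obtain ⟨q, hq⟩ := hd
      rw [hq, mul_comm, map_mul]; exact one_mul_mem (alg_mem_one _) hdd
    conv_lhs => unfold Ad
    rw [Submodule.add_eq_sup]
    refine sup_le ?_ ?_
    · rw [Submodule.span_le, Set.singleton_subset_iff]; exact hdd
    · conv_lhs => unfold AI
      rw [Submodule.span_le]
      rintro _ ⟨j, hj, rfl⟩
      have hw := mem_AI (O := O) (c := c) (θ := θ) hj
      have h1 := mem_AI (O := O) (c := c) (θ := θ) (show 1 < n by omega)
      have e1 : algebraMap S L d * (zt c θ j + algebraMap S L (c j)) ∈ M :=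
        Submodule.mul_mem_mul d_mem_Ad (AI_le_Ad hw)
      have e2 : (zt c θ j + algebraMap S L (c j)) * algebraMap S L d' ∈ M :=
        Submodule.mul_mem_mul (AI_le_Ad hw) d_mem_Ad
      have e3 : (zt c θ 1 + algebraMap S L (c 1)) * (zt c θ j + algebraMap S L (c j)) ∈ M :=
        Submodule.mul_mem_mul (AI_le_Ad h1) (AI_le_Ad hw)
      have e4 : zt c θ (j + 1) * algebraMap S L (c 0) ∈ M := one_mul_mem (hz _ hj) hc0
      have key : zt c θ j + algebraMap S L (c j) =
          algebraMap S L x * (algebraMap S L d * (zt c θ j + algebraMap S L (c j))) +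
          algebraMap S L y * ((zt c θ j + algebraMap S L (c j)) * algebraMap S L d') +
          algebraMap S L t * ((zt c θ 1 + algebraMap S L (c 1)) *
            (zt c θ j + algebraMap S L (c j)) - zt c θ (j + 1) * algebraMap S L (c 0)) := by
        have := congrArg (algebraMap S L) hxy
        simp only [map_add, map_mul, map_one] at this
        rw [zt_one, zt_succ]
        linear_combination (-(zt c θ j + algebraMap S L (c j))) * this
      show _ ∈ M
      rw [key]
      exact add_mem (add_mem (one_mul_mem (alg_mem_one _) e1) (one_mul_mem (alg_mem_one _) e2))
        (one_mul_mem (alg_mem_one _) (sub_mem e3 e4))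

lemma aeval_mem_II {θ : L} (q : S[X]) {N : ℕ} (hq : q.natDegree ≤ N) :
    Polynomial.aeval θ q ∈ (II O θ) ^ N := by
  have hpow : ∀ i ≤ N, θ ^ i ∈ (II O θ) ^ N := by
    intro i hi
    have a1 : θ ^ i ∈ (II O θ) ^ i :=
      Submodule.pow_mem_pow _ (Submodule.subset_span (by simp) : θ ∈ II O θ) _
    have a2 : (1 : L) ^ (N - i) ∈ (II O θ) ^ (N - i) :=
      Submodule.pow_mem_pow _ (Submodule.subset_span (by simp) : (1 : L) ∈ II O θ) _
    have := Submodule.mul_mem_mul a1 a2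
    rwa [one_pow, mul_one, ← pow_add, Nat.add_sub_cancel' hi] at this
  rw [Polynomial.aeval_eq_sum_range' (Nat.lt_succ_of_le hq)]
  refine sum_mem fun i hi => ?_
  rw [Algebra.smul_def]
  exact one_mul_mem (alg_mem_one _) (hpow i (by have := Finset.mem_range.1 hi; omega))

lemma span_aeval_mul {n : ℕ} {c : ℕ → S} {θ : L} (hAI : AI O n c θ * II O θ = 1)
    (q : S[X]) {N : ℕ} (hq : q.natDegree ≤ N) :
    Submodule.span O {Polynomial.aeval θ q} * AI O n c θ ^ N ≤ 1 := by
  calc _ ≤ (II O θ) ^ N * AI O n c θ ^ N := mul_le_mul_left (by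
          rw [Submodule.span_le, Set.singleton_subset_iff]; exact aeval_mem_II q hq) _
    _ = 1 := by rw [← mul_pow, mul_comm (II O θ), hAI, one_pow]

lemma aeval_mul_mem {n : ℕ} {c : ℕ → S} {θ : L} (hAI : AI O n c θ * II O θ = 1)
    (q : S[X]) {N : ℕ} (hq : q.natDegree ≤ N) {a : L} (ha : a ∈ AI O n c θ ^ N) :
    Polynomial.aeval θ q * a ∈ (1 : Submodule O L) :=
  span_aeval_mul hAI q hq (Submodule.mul_mem_mul (Submodule.mem_span_singleton_self _) ha)

end Aux
section Aux2

variable {S O L : Type} [CommRing S] [CommRing O] [CommRing L] [Algebra S O] [Algebra O L]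
  [Algebra S L] [IsScalarTower S O L]

/-- the polynomial `F(x,1)` over the base ring. -/
def FP (n : ℕ) (c : ℕ → S) : S[X] :=
  ∑ i ∈ Finset.range (n + 1), Polynomial.C (c i) * Polynomial.X ^ (n - i)

lemma aeval_FP {n : ℕ} {c : ℕ → S} {θ : L} (h : RootOf n c θ) :
    Polynomial.aeval θ (FP n c) = 0 := by
  unfold FP
  simpa [RootOf] using h

lemma zt_pow_congr {n : ℕ} {c : ℕ → S} {θ : L} (h : RootOf n c θ)
    (hz : ∀ i ≤ n, zt c θ i ∈ (1 : Submodule O L)) {j : ℕ} (hj : j ≤ n) (r : ℕ) :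
    zt c θ j ^ r - algebraMap S L ((-c j) ^ r) ∈ AI O n c θ := by
  induction r with
  | zero => simp
  | succ r ih =>
    have e : zt c θ j ^ (r + 1) - algebraMap S L ((-c j) ^ (r + 1)) =
        zt c θ j * (zt c θ j ^ r - algebraMap S L ((-c j) ^ r)) +
        algebraMap S L ((-c j) ^ r) * (zt c θ j + algebraMap S L (c j)) := by
      rw [pow_succ (-c j), map_mul, map_neg]; ring
    rw [e]
    exact add_mem (one_mul_mem (hz j hj) ih)
      (one_mul_mem (alg_mem_one _) (zt_add_mem_AI h hj))

lemma exists_sqrt {n s : ℕ} (hns : n = 2 * s + 1) {c : ℕ → S} {θ : L} (h : RootOf n c θ)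
    (hz : ∀ i ≤ n, zt c θ i ∈ (1 : Submodule O L)) (hAI : AI O n c θ * II O θ = 1)
    {p u : S} {G E U V W : S[X]} (hG : G.natDegree ≤ s) (hE : E.natDegree ≤ n)
    (hrel : Polynomial.C u * FP n c = G ^ 2 + Polynomial.C p * E)
    (hbez : U * G + V * E = 1 + Polynomial.C p * W)
    (hpe : p * E.coeff n = u * c 0)
    (hcase : (∃ j, 1 ≤ j ∧ j ≤ n ∧ ∃ x y, x * (E.coeff n * (-c j) ^ n) + y * p = 1) ∨
      (∃ x y, x * (u * (-c 1) ^ n) + y * p = 1)) :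
    ∃ Q : Submodule O L, Q * Q * Ad O n c θ p = Submodule.span O {algebraMap S L p} := by
  set A := AI O n c θ with hA
  set Ap := Ad O n c θ p with hAp
  set g := Polynomial.aeval θ G with hg
  set ε := Polynomial.aeval θ E with hε
  set P := Submodule.span O {algebraMap S L p} with hP
  set sg := Submodule.span O {g} with hsg
  set sε := Submodule.span O {ε} with hsε
  have hA1 : A ≤ 1 := AI_le_one hz
  have hAp1 : Ap ≤ 1 := Ad_le_one hz
  have hP1 : P ≤ 1 := by
    rw [hP, Submodule.span_le, Set.singleton_subset_iff]; exact alg_mem_one _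
  have hgε : g ^ 2 = - (algebraMap S L p * ε) := by
    have := congrArg (Polynomial.aeval θ) hrel
    simp only [map_mul, aeval_FP h, mul_zero, map_add, map_pow, Polynomial.aeval_C] at this
    exact eq_neg_of_add_eq_zero_left this.symm
  have hsgε : sg * sg = P * sε := by
    rw [hsg, hP, hsε, Submodule.span_mul_span, Submodule.span_mul_span,
      Set.singleton_mul_singleton, Set.singleton_mul_singleton, ← sq, hgε,
      ← Set.neg_singleton, Submodule.span_neg]
  set B := P * Ap + sg * A ^ s * Ap + sε * A ^ (n - 1) * Ap with hB
  refine ⟨P + sg * A ^ s, ?_⟩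
  have e1 : (P + sg * A ^ s) * (P + sg * A ^ s) * Ap = P * B := by
    have : n - 1 = s + s := by omega
    rw [hB, this, pow_add]
    have : (P + sg * A ^ s) * (P + sg * A ^ s) * Ap =
      P * P * Ap + (P * (sg * A ^ s) * Ap + P * (sg * A ^ s) * Ap) +
        (sg * sg) * (A ^ s * A ^ s) * Ap := by ring
    rw [this, add_idem, hsgε]
    ring
  rw [e1]
  suffices hB1 : B = 1 by rw [hB1, mul_one]
  have hgA : sg * A ^ s ≤ 1 := span_aeval_mul hAI G hG
  have hεA : sε * A ^ n ≤ 1 := span_aeval_mul hAI E hE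
  have hApPA : Ap = P + A := rfl
  have hPAp : P * Ap ≤ B := by
    simp only [hB, Submodule.add_eq_sup]; exact le_sup_of_le_left le_sup_left
  have hGAp : sg * A ^ s * Ap ≤ B := by
    simp only [hB, Submodule.add_eq_sup]; exact le_sup_of_le_left le_sup_right
  have hEAp : sε * A ^ (n - 1) * Ap ≤ B := by
    simp only [hB, Submodule.add_eq_sup]; exact le_sup_right
  have hnn : A ^ n = A ^ (n - 1) * A := by
    rw [← pow_succ]; congr 1; omega
  have hBle : B ≤ 1 := by
    rw [hB]
    simp only [Submodule.add_eq_sup]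
    refine sup_le (sup_le ?_ ?_) ?_
    · exact (mul_le_mul' hP1 hAp1).trans (by rw [one_mul])
    · exact (mul_le_mul' hgA hAp1).trans (by rw [one_mul])
    · rw [hApPA, mul_add, Submodule.add_eq_sup]
      refine sup_le ?_ ?_
      · have : sε * A ^ (n - 1) * P = sg * A ^ s * (sg * A ^ s) := by
          have h2 : n - 1 = s + s := by omega
          have : sg * A ^ s * (sg * A ^ s) = (sg * sg) * (A ^ s * A ^ s) := by ring
          rw [this, hsgε, h2, pow_add]; ring
        rw [this]
        exact (mul_le_mul' hgA hgA).trans (by rw [one_mul])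
      · rw [mul_assoc, ← hnn]; exact hεA
  refine le_antisymm hBle ?_
  -- an element of `B` congruent to a unit
  have hcop : (1 : L) ∈ B + Ap := by
    have hsplit : E = Polynomial.C (E.coeff n) * Polynomial.X ^ n + (E.erase n) := by
      conv_lhs => rw [← Polynomial.monomial_add_erase E n]
      rw [Polynomial.C_mul_X_pow_eq_monomial]
    have hE' : (E.erase n).natDegree ≤ n - 1 := by
      rw [Polynomial.natDegree_le_iff_coeff_eq_zero]
      intro N hN
      by_cases hNn : N = n
      · subst hNn; simp
      · rw [Polynomial.erase_ne _ hNn]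
        exact Polynomial.coeff_eq_zero_of_natDegree_lt (by omega)
    have hεs : ε = algebraMap S L (E.coeff n) * θ ^ n + Polynomial.aeval θ (E.erase n) := by
      rw [hε]; conv_lhs => rw [hsplit]
      simp
    have hBB : B ≤ B + Ap := by rw [Submodule.add_eq_sup]; exact le_sup_left
    have hAA : Ap ≤ B + Ap := by rw [Submodule.add_eq_sup]; exact le_sup_right
    have fin : ∀ (v x y : S) (b : L), b ∈ B → b - algebraMap S L v ∈ Ap → x * v + y * p = 1 →
        (1 : L) ∈ B + Ap := by
      intro v x y b hb hbv hxy
      have e : (1 : L) = algebraMap S L x * b - algebraMap S L x * (b - algebraMap S L v) +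
          algebraMap S L y * algebraMap S L p := by
        rw [← map_one (algebraMap S L), ← hxy]; simp only [map_add, map_mul]; ring
      rw [e]
      exact add_mem (sub_mem (one_mul_mem (alg_mem_one _) (hBB hb))
        (one_mul_mem (alg_mem_one _) (hAA hbv))) (one_mul_mem (alg_mem_one _) (hAA d_mem_Ad))
    rcases hcase with ⟨j, hj1, hjn, x, y, hxy⟩ | ⟨x, y, hxy⟩
    · obtain ⟨i, rfl⟩ : ∃ i, j = i + 1 := ⟨j - 1, by omega⟩
      set a := zt c θ i + algebraMap S L (c i) with ha
      have haA : a ∈ A := mem_AI (by omega)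
      have hθa : a * θ = zt c θ (i + 1) := (zt_succ c θ i).symm
      refine fin _ x y (ε * a ^ (n - 1) * a) ?_ ?_ hxy
      · exact hEAp (Submodule.mul_mem_mul (Submodule.mul_mem_mul
          (Submodule.mem_span_singleton_self _) (Submodule.pow_mem_pow _ haA _)) (AI_le_Ad haA))
      · have e : ε * a ^ (n - 1) * a - algebraMap S L (E.coeff n * (-c (i + 1)) ^ n) =
            algebraMap S L (E.coeff n) *
              (zt c θ (i + 1) ^ n - algebraMap S L ((-c (i + 1)) ^ n)) +
            (Polynomial.aeval θ (E.erase n) * a ^ (n - 1)) * a := by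
          rw [← hθa, hεs, mul_pow, map_mul]
          have : a ^ n = a ^ (n - 1) * a := by rw [← pow_succ]; congr 1; omega
          rw [this]; ring
        rw [e]
        refine AI_le_Ad (add_mem (one_mul_mem (alg_mem_one _) (zt_pow_congr h hz hjn n)) ?_)
        exact one_mul_mem (aeval_mul_mem hAI _ hE' (Submodule.pow_mem_pow _ haA _)) haA
    · set a := algebraMap S L (c 0) with ha
      have haA : a ∈ A := c0_mem_AI (by omega)
      have hθa : a * θ = zt c θ 1 := (zt_one c θ).symm
      refine fin _ x y (ε * a ^ (n - 1) * algebraMap S L p) ?_ ?_ hxy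
      · exact hEAp (Submodule.mul_mem_mul (Submodule.mul_mem_mul
          (Submodule.mem_span_singleton_self _) (Submodule.pow_mem_pow _ haA _)) d_mem_Ad)
      · have e : ε * a ^ (n - 1) * algebraMap S L p - algebraMap S L (u * (-c 1) ^ n) =
            algebraMap S L u * (zt c θ 1 ^ n - algebraMap S L ((-c 1) ^ n)) +
            (Polynomial.aeval θ (E.erase n) * a ^ (n - 1)) * algebraMap S L p := by
          rw [← hθa, hεs, mul_pow, map_mul]
          have : a ^ n = a ^ (n - 1) * a := by rw [← pow_succ]; congr 1; omega
          rw [this]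
          have h3 := congrArg (algebraMap S L) hpe
          simp only [map_mul] at h3
          linear_combination (a ^ (n - 1) * θ ^ n) * h3
        rw [e]
        refine add_mem (AI_le_Ad (one_mul_mem (alg_mem_one _) (zt_pow_congr h hz (by omega) n))) ?_
        exact one_mul_mem (aeval_mul_mem hAI _ hE' (Submodule.pow_mem_pow _ haA _)) d_mem_Ad
  -- nilpotence
  obtain ⟨N, hN1, hN2, hN3⟩ : ∃ N, U.natDegree + s ≤ N ∧ V.natDegree + n ≤ N ∧
      W.natDegree ≤ N :=
    ⟨U.natDegree + s + (V.natDegree + n) + W.natDegree, by omega, by omega, by omega⟩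
  have hAN : A ^ N ≤ sg * A ^ s + sε * A ^ n + P := by
    intro a ha
    have hb := congrArg (Polynomial.aeval θ) hbez
    simp only [map_mul, map_add, map_one, Polynomial.aeval_C] at hb
    have e : a = g * (Polynomial.aeval θ U * a) + ε * (Polynomial.aeval θ V * a) -
        (Polynomial.aeval θ W * a) * algebraMap S L p := by
      linear_combination (-a) * hb
    have hstep : ∀ (q : S[X]) (m : ℕ), q.natDegree + m ≤ N → Polynomial.aeval θ q * a ∈ A ^ m := by
      intro q m hm
      have h1 : Polynomial.aeval θ q * a ∈ Submodule.span O {Polynomial.aeval θ q} * A ^ N :=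
        Submodule.mul_mem_mul (Submodule.mem_span_singleton_self _) ha
      have h2 : A ^ N = A ^ (N - m) * A ^ m := by rw [← pow_add]; congr 1; omega
      rw [h2, ← mul_assoc] at h1
      have := (mul_le_mul_left (span_aeval_mul hAI q (show q.natDegree ≤ N - m by omega))
        (A ^ m)) h1
      rwa [one_mul] at this
    rw [e]
    refine sub_mem (add_mem ?_ ?_) ?_
    · have : g * (Polynomial.aeval θ U * a) ∈ sg * A ^ s :=
        Submodule.mul_mem_mul (Submodule.mem_span_singleton_self _) (hstep _ _ hN1)
      simp only [Submodule.add_eq_sup]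
      exact Submodule.mem_sup_left (Submodule.mem_sup_left this)
    · have : ε * (Polynomial.aeval θ V * a) ∈ sε * A ^ n :=
        Submodule.mul_mem_mul (Submodule.mem_span_singleton_self _) (hstep _ _ hN2)
      simp only [Submodule.add_eq_sup]
      exact Submodule.mem_sup_left (Submodule.mem_sup_right this)
    · have : (Polynomial.aeval θ W * a) * algebraMap S L p ∈ P :=
        one_mul_mem (aeval_mul_mem hAI _ hN3 ha) (Submodule.mem_span_singleton_self _)
      simp only [Submodule.add_eq_sup]
      exact le_sup_right (a := sg * A ^ s ⊔ sε * A ^ n) this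
  have hApAN : Ap * A ^ N ≤ B := by
    calc Ap * A ^ N ≤ Ap * (sg * A ^ s + sε * A ^ n + P) := mul_le_mul_right hAN _
      _ = sg * A ^ s * Ap + (sε * A ^ (n - 1) * Ap) * A + P * Ap := by rw [hnn]; ring
      _ ≤ B := by
        simp only [Submodule.add_eq_sup]
        refine sup_le (sup_le hGAp ?_) hPAp
        calc _ ≤ (sε * A ^ (n - 1) * Ap) * 1 := mul_le_mul_right hA1 _
          _ = sε * A ^ (n - 1) * Ap := mul_one _
          _ ≤ B := hEAp
  have hcop' : B + Ap = 1 := le_antisymm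
    (by rw [Submodule.add_eq_sup]; exact sup_le hBle hAp1) (one_le_iff'.2 hcop)
  have hstep1 : Ap ≤ B + Ap * A := by
    calc Ap = Ap * (B + Ap) := by rw [hcop', mul_one]
      _ = Ap * B + (Ap * A + P * Ap) := by
        conv_lhs => rw [mul_add]
        congr 1
        conv_lhs => rw [hApPA]
        conv_rhs => rw [hApPA]
        have : (P + A) * (P + A) = (P + A) * A + P * (P + A) := by ring
        exact this
      _ ≤ B + Ap * A := by
        simp only [Submodule.add_eq_sup]
        refine sup_le ?_ (sup_le le_sup_right (hPAp.trans le_sup_left))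
        exact le_sup_of_le_left ((mul_le_mul_left hAp1 B).trans (by rw [one_mul]))
  have hiter : ∀ j, Ap ≤ B + Ap * A ^ j := by
    intro j
    induction j with
    | zero => rw [pow_zero, mul_one, Submodule.add_eq_sup]; exact le_sup_right
    | succ j ih =>
      refine ih.trans ?_
      have : Ap * A ^ j ≤ (B + Ap * A) * A ^ j := mul_le_mul_left hstep1 _
      rw [add_mul, mul_assoc, ← pow_succ'] at this
      simp only [Submodule.add_eq_sup] at this ⊢
      refine sup_le le_sup_left (this.trans (sup_le_sup ?_ le_rfl))
      have hAj : A ^ j ≤ 1 := pow_le_one' hA1 j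
      exact (mul_le_mul_right hAj B).trans (by rw [mul_one])
  have hApB : Ap ≤ B := (hiter N).trans (by
    rw [Submodule.add_eq_sup]; exact sup_le le_rfl hApAN)
  rw [← hcop', Submodule.add_eq_sup]
  exact sup_le le_rfl hApB

end Aux2
section Aux3

variable {S L : Type} [CommRing S] [CommRing L] [Algebra S L]

/-- the order as a subalgebra. -/
def OS (n : ℕ) (c : ℕ → S) (θ : L) : Subalgebra S L :=
  Algebra.adjoin S {x | ∃ i ≤ n, x = zt c θ i}

lemma zt_mem_OS {n : ℕ} {c : ℕ → S} {θ : L} {i : ℕ} (hi : i ≤ n) : zt c θ i ∈ OS n c θ :=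
  Algebra.subset_adjoin ⟨i, hi, rfl⟩

lemma mem_one_OS {n : ℕ} {c : ℕ → S} {θ : L} {x : L} :
    x ∈ (1 : Submodule (OS n c θ) L) ↔ x ∈ OS n c θ := by
  rw [Submodule.mem_one]
  constructor
  · rintro ⟨y, rfl⟩; exact y.2
  · intro hx; exact ⟨⟨x, hx⟩, rfl⟩

lemma OS_toSubmodule {n : ℕ} {c : ℕ → S} {θ : L} (h : RootOf n c θ) :
    Subalgebra.toSubmodule (OS n c θ) =
      Submodule.span S ({1} ∪ {x | ∃ i, 1 ≤ i ∧ i ≤ n - 1 ∧ x = zt c θ i}) := by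
  set M := Submodule.span S ({1} ∪ {x | ∃ i, 1 ≤ i ∧ i ≤ n - 1 ∧ x = zt c θ i}) with hM
  have h1 : (1 : L) ∈ M := Submodule.subset_span (Or.inl rfl)
  have hs : ∀ s : S, algebraMap S L s ∈ M := fun s => by
    rw [Algebra.algebraMap_eq_smul_one]; exact M.smul_mem _ h1
  have hz : ∀ i ≤ n, zt c θ i ∈ M := by
    intro i hi
    rcases Nat.eq_zero_or_pos i with rfl | hi0
    · rw [zt_zero]; exact zero_mem _
    · rcases hi.lt_or_eq with hi | rfl
      · exact Submodule.subset_span (Or.inr ⟨i, hi0, by omega, rfl⟩)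
      · rw [zt_n h]; exact neg_mem (hs _)
  have hsm : ∀ (s : S) (x : L), x ∈ M → algebraMap S L s * x ∈ M := fun s x hx => by
    rw [← Algebra.smul_def]; exact M.smul_mem _ hx
  have hzz : ∀ i ≤ n, ∀ j ≤ n, zt c θ i * zt c θ j ∈ M := by
    intro i
    induction i with
    | zero => intro _ j _; rw [zt_zero, zero_mul]; exact zero_mem _
    | succ i ih =>
      intro hi j hj
      rcases hj.lt_or_eq with hj | rfl
      · have e : zt c θ (i + 1) * zt c θ j = zt c θ i * zt c θ (j + 1) +
            algebraMap S L (c i) * zt c θ (j + 1) - algebraMap S L (c j) * zt c θ (i + 1) := by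
          rw [zt_succ, zt_succ]; ring
        rw [e]
        exact sub_mem (add_mem (ih (by omega) _ hj) (hsm _ _ (hz _ hj))) (hsm _ _ (hz _ hi))
      · rw [zt_n h, mul_comm, neg_mul]
        exact neg_mem (hsm _ _ (hz _ hi))
  have hmul : ∀ x y, x ∈ M → y ∈ M → x * y ∈ M := by
    intro x y hx hy
    have : M * M ≤ M := by
      conv_lhs => rw [hM, Submodule.span_mul_span]
      rw [Submodule.span_le]
      rintro _ ⟨a, ha, b, hb, rfl⟩
      rcases ha with rfl | ⟨i, hi1, hi2, rfl⟩
      · show (1 : L) * b ∈ M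
        rw [one_mul]; exact Submodule.subset_span hb
      · rcases hb with rfl | ⟨j, hj1, hj2, rfl⟩
        · show _ * (1 : L) ∈ M
          rw [mul_one]; exact hz _ (by omega)
        · exact hzz _ (by omega) _ (by omega)
    exact this (Submodule.mul_mem_mul hx hy)
  apply le_antisymm
  · have : OS n c θ ≤ Submodule.toSubalgebra M h1 hmul := by
      refine Algebra.adjoin_le ?_
      rintro _ ⟨i, hi, rfl⟩
      exact hz i hi
    exact fun x hx => this hx
  · rw [hM, Submodule.span_le]
    rintro _ (rfl | ⟨i, hi1, hi2, rfl⟩)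
    · exact one_mem (OS n c θ)
    · exact zt_mem_OS (by omega)

lemma zt_add (c : ℕ → S) (θ : L) (k i : ℕ) :
    zt c θ (k + i) = zt c θ k * θ ^ i +
      ∑ m ∈ Finset.range i, algebraMap S L (c (k + m)) * θ ^ (i - m) := by
  unfold zt
  rw [Finset.sum_range_add, Finset.sum_mul]
  congr 1
  · refine Finset.sum_congr rfl fun j hj => ?_
    have : k + i - j = (k - j) + i := by have := Finset.mem_range.1 hj; omega
    rw [this, pow_add, mul_assoc]
  · refine Finset.sum_congr rfl fun j hj => ?_
    rw [Nat.add_sub_add_left]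

lemma II_pow_le {O : Type} [CommRing O] [Algebra O L] (θ : L) (N : ℕ) :
    (II O θ) ^ N ≤ Submodule.span O {x | ∃ i ≤ N, x = θ ^ i} := by
  induction N with
  | zero =>
    rw [pow_zero, one_le_iff']
    exact Submodule.subset_span ⟨0, le_rfl, by simp⟩
  | succ N ih =>
    rw [pow_succ]
    refine (mul_le_mul_left ih _).trans ?_
    unfold II
    rw [Submodule.span_mul_span, Submodule.span_le]
    rintro _ ⟨_, ⟨i, hi, rfl⟩, y, hy, rfl⟩
    rcases hy with rfl | rfl
    · exact Submodule.subset_span ⟨i, by omega, by simp⟩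
    · exact Submodule.subset_span ⟨i + 1, by omega, by simp [pow_succ]⟩

lemma II_pow_mem {n : ℕ} {c : ℕ → S} {θ : L} (h : RootOf n c θ) (T : Submodule S L) (N : ℕ)
    (hT : ∀ i ≤ N, θ ^ i ∈ T) (hT2 : ∀ j < n, zt c θ j ∈ T) {x : L}
    (hx : x ∈ (II (OS n c θ) θ) ^ N) : x ∈ T := by
  have hsm : ∀ (s : S) (x : L), x ∈ T → algebraMap S L s * x ∈ T := fun s x hx => by
    rw [← Algebra.smul_def]; exact T.smul_mem _ hx
  have hzθ : ∀ k < n, ∀ i ≤ N, zt c θ k * θ ^ i ∈ T := by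
    intro k hk i hi
    by_cases hki : k + i < n
    · have e : zt c θ k * θ ^ i = zt c θ (k + i) -
        ∑ m ∈ Finset.range i, algebraMap S L (c (k + m)) * θ ^ (i - m) := by rw [zt_add]; ring
      rw [e]
      exact sub_mem (hT2 _ hki) (sum_mem fun m _ => hsm _ _ (hT _ (by omega)))
    · obtain ⟨a, rfl⟩ : ∃ a, n = k + a := ⟨n - k, by omega⟩
      obtain ⟨b, rfl⟩ : ∃ b, i = a + b := ⟨i - a, by omega⟩
      have h1 := zt_add c θ k a
      rw [zt_n h] at h1
      have e : zt c θ k * θ ^ (a + b) = - (algebraMap S L (c (k + a)) * θ ^ b) -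
          ∑ m ∈ Finset.range a, algebraMap S L (c (k + m)) * θ ^ (a - m + b) := by
        have : ∑ m ∈ Finset.range a, algebraMap S L (c (k + m)) * θ ^ (a - m + b) =
          (∑ m ∈ Finset.range a, algebraMap S L (c (k + m)) * θ ^ (a - m)) * θ ^ b := by
          rw [Finset.sum_mul]
          exact Finset.sum_congr rfl fun m _ => by rw [pow_add, mul_assoc]
        rw [this, pow_add]
        linear_combination (-θ ^ b) * h1
      rw [e]
      refine sub_mem (neg_mem (hsm _ _ (hT _ (by omega)))) (sum_mem fun m hm => hsm _ _ (hT _ ?_))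
      have := Finset.mem_range.1 hm; omega
  have hr : ∀ r ∈ OS n c θ, ∀ i ≤ N, r * θ ^ i ∈ T := by
    intro r hr i hi
    have hr' : r ∈ Subalgebra.toSubmodule (OS n c θ) := hr
    rw [OS_toSubmodule h] at hr'
    induction hr' using Submodule.span_induction with
    | mem x hx =>
      rcases hx with rfl | ⟨k, hk1, hk2, rfl⟩
      · rw [one_mul]; exact hT i hi
      · exact hzθ k (by omega) i hi
    | zero => rw [zero_mul]; exact zero_mem _
    | add x y hx hy h1 h2 =>
      have hx' : x ∈ OS n c θ := by
        rw [← OS_toSubmodule h] at hx; exact hx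
      have hy' : y ∈ OS n c θ := by
        rw [← OS_toSubmodule h] at hy; exact hy
      rw [add_mul]; exact add_mem (h1 hx') (h2 hy')
    | smul a x hx h1 =>
      have hx' : x ∈ OS n c θ := by
        rw [← OS_toSubmodule h] at hx; exact hx
      rw [smul_mul_assoc]; exact T.smul_mem _ (h1 hx')
  have hx2 := II_pow_le (O := OS n c θ) θ N hx
  have key : ∀ r : OS n c θ, r • x ∈ T := by
    clear hx
    induction hx2 using Submodule.span_induction with
    | mem x hx =>
      obtain ⟨i, hi, rfl⟩ := hx
      intro r
      exact hr r r.2 i hi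
    | zero => intro r; rw [smul_zero]; exact zero_mem _
    | add x y _ _ h1 h2 => intro r; rw [smul_add]; exact add_mem (h1 r) (h2 r)
    | smul a x _ h1 => intro r; rw [smul_smul]; exact h1 _
  simpa using key 1

lemma rs_mul {n : ℕ} {c : ℕ → S} {θ : L} (M N : Submodule (OS n c θ) L) :
    (M * N).restrictScalars S = M.restrictScalars S * N.restrictScalars S := by
  apply le_antisymm
  · intro x hx
    rw [Submodule.restrictScalars_mem] at hx
    induction hx using Submodule.mul_induction_on' with
    | mem_mul_mem m hm n hn => exact Submodule.mul_mem_mul hm hn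
    | add x _ y _ h1 h2 => exact add_mem h1 h2
  · rw [Submodule.mul_le]
    intro m hm n hn
    exact Submodule.mul_mem_mul (M := M) (N := N) hm hn

end Aux3

section Aux4

variable {S F : Type} [CommRing S] [Field F] [Algebra S F]

lemma binPoly_eq (n : ℕ) (c : ℕ → S) : binPoly S F n c = (FP n c).map (algebraMap S F) := by
  unfold binPoly FP
  simp [Polynomial.map_sum]

lemma aeval_θF (n : ℕ) (c : ℕ → S) (q : S[X]) :
    Polynomial.aeval (θF S F n c) q = AdjoinRoot.mk _ (q.map (algebraMap S F)) := by
  rw [← Polynomial.aeval_map_algebraMap F]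
  exact AdjoinRoot.aeval_eq _

lemma root_θF (n : ℕ) (c : ℕ → S) : RootOf n c (θF S F n c) := by
  have h1 : Polynomial.aeval (θF S F n c) (FP n c) = 0 := by
    rw [aeval_θF, ← binPoly_eq, AdjoinRoot.mk_self]
  unfold FP at h1
  simpa [RootOf] using h1

lemma zt_θF (n : ℕ) (c : ℕ → S) (i : ℕ) : zt c (θF S F n c) i = ζF S F n c i := rfl

lemma OS_RFmod (n : ℕ) (c : ℕ → S) :
    Subalgebra.toSubmodule (OS n c (θF S F n c)) = RFmod S F n c :=
  OS_toSubmodule (root_θF n c)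

lemma FP_coeff (n : ℕ) (c : ℕ → S) (j : ℕ) :
    (FP n c).coeff j = if j ≤ n then c (n - j) else 0 := by
  unfold FP
  simp only [Polynomial.finsetSum_coeff, Polynomial.coeff_C_mul_X_pow]
  split_ifs with hj
  · rw [Finset.sum_eq_single (n - j)]
    · rw [if_pos (by omega)]
    · intro b hb hb2
      rw [if_neg]; have := Finset.mem_range.1 hb; omega
    · intro hb; exfalso; apply hb; rw [Finset.mem_range]; omega
  · refine Finset.sum_eq_zero fun i hi => if_neg ?_
    omega

lemma FP_natDegree_le (n : ℕ) (c : ℕ → S) : (FP n c).natDegree ≤ n := by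
  rw [Polynomial.natDegree_le_iff_coeff_eq_zero]
  intro N hN
  rw [FP_coeff, if_neg (by omega)]

lemma binPoly_natDegree (hinj : Function.Injective (algebraMap S F)) (n : ℕ) (c : ℕ → S)
    (hc : c 0 ≠ 0) : (binPoly S F n c).natDegree = n := by
  rw [binPoly_eq, Polynomial.natDegree_map_eq_of_injective hinj]
  refine le_antisymm (FP_natDegree_le n c) (Polynomial.le_natDegree_of_ne_zero ?_)
  rw [FP_coeff, if_pos le_rfl, Nat.sub_self]; exact hc

lemma int_quad {S L : Type} [CommRing S] [CommRing L] [Algebra S L] {y b d : L}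
    (hb : IsIntegral S b) (hd : IsIntegral S d) (h : y ^ 2 = b * y + d) : IsIntegral S y := by
  have hint : IsIntegral (integralClosure S L) y := by
    let b' : integralClosure S L := ⟨b, hb⟩
    let d' : integralClosure S L := ⟨d, hd⟩
    refine ⟨Polynomial.X ^ (1 + 1) - (Polynomial.C b' * Polynomial.X + Polynomial.C d'), ?_, ?_⟩
    · exact Polynomial.monic_X_pow_sub (by exact_mod_cast Polynomial.degree_linear_lt)
    · simp only [Polynomial.eval₂_sub, Polynomial.eval₂_add, Polynomial.eval₂_mul,
          Polynomial.eval₂_pow, Polynomial.eval₂_X, Polynomial.eval₂_C]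
      show y ^ (1 + 1) - (b * y + d) = 0
      linear_combination h
  exact isIntegral_trans y hint

lemma nonmax (hinj : Function.Injective (algebraMap S F)) {n : ℕ} (hn : 1 ≤ n) {c : ℕ → S}
    (hc : c 0 ≠ 0) (g : ℕ → S) (hg : ∑ i ∈ Finset.range (n + 1), g i * c i = 1)
    (hmax : IsMaxOrder S F n c) {π : S} (hπ : π ≠ 0) {w b d : S[X]}
    (hw : w.natDegree ≤ n - 1) (hb : b.natDegree ≤ n - 1)
    (hd : d.natDegree ≤ (n - 1) + (n - 1))
    (hrel : FP n c ∣ w ^ 2 - (Polynomial.C π * b * w + Polynomial.C π ^ 2 * d)) (i : ℕ) :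
    π ∣ w.coeff i := by
  set θ := θF S F n c with hθ
  have hroot : RootOf n c θ := root_θF n c
  have hz : ∀ i ≤ n, zt c θ i ∈ (1 : Submodule (OS n c θ) (KF S F n c)) := fun i hi =>
    mem_one_OS.2 (zt_mem_OS hi)
  have hAI : AI (OS n c θ) n c θ * II (OS n c θ) θ = 1 := AI_mul_II hn hroot hz g hg
  have hOS : OS n c θ = integralClosure S (KF S F n c) := by
    have := OS_RFmod (F := F) n c
    rw [hmax] at this
    exact Subalgebra.toSubmodule_injective this
  have hπF : algebraMap S F π ≠ 0 := by
    rw [Ne, map_eq_zero_iff _ hinj]; exact hπ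
  set ϖ : KF S F n c := algebraMap F _ (algebraMap S F π)⁻¹ with hϖ
  have hϖπ : ϖ * algebraMap S (KF S F n c) π = 1 := by
    rw [hϖ, IsScalarTower.algebraMap_apply S F (KF S F n c), ← map_mul, inv_mul_cancel₀ hπF, map_one]
  set y := ϖ * Polynomial.aeval θ w with hy
  have hy2 : y ^ 2 = Polynomial.aeval θ b * y + Polynomial.aeval θ d := by
    obtain ⟨q, hq⟩ := hrel
    have := congrArg (Polynomial.aeval θ) hq
    rw [map_mul, aeval_FP hroot, zero_mul] at this
    simp only [map_sub, map_add, map_mul, map_pow, Polynomial.aeval_C] at this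
    rw [hy]
    linear_combination ϖ ^ 2 * this + (Polynomial.aeval θ b * ϖ * Polynomial.aeval θ w +
      Polynomial.aeval θ d * (ϖ * algebraMap S (KF S F n c) π + 1)) * hϖπ
  have hyA : Submodule.span (OS n c θ) {y} * AI (OS n c θ) n c θ ^ (n - 1) ≤ 1 := by
    intro x hx
    obtain ⟨a, ha, rfl⟩ := Submodule.mem_span_singleton_mul.1 hx
    have h1 := mem_one_OS.1 (aeval_mul_mem hAI b hb ha)
    have h2 := mem_one_OS.1 (aeval_mul_mem hAI d hd
      (by rw [pow_add]; exact Submodule.mul_mem_mul ha ha))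
    rw [mem_one_OS, hOS, mem_integralClosure_iff]
    rw [hOS, mem_integralClosure_iff] at h1 h2
    refine int_quad h1 h2 ?_
    linear_combination a ^ 2 * hy2
  have hyI : y ∈ II (OS n c θ) θ ^ (n - 1) := by
    have h1 := mul_le_mul_left hyA (II (OS n c θ) θ ^ (n - 1))
    rw [mul_assoc, ← mul_pow, hAI, one_pow, mul_one, one_mul] at h1
    exact h1 (Submodule.mem_span_singleton_self _)
  have hyT : y ∈ Submodule.span S {x | ∃ i ≤ n - 1, x = θ ^ i} := by
    have hT : ∀ i ≤ n - 1, θ ^ i ∈ Submodule.span S {x | ∃ i ≤ n - 1, x = θ ^ i} :=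
      fun i hi => Submodule.subset_span ⟨i, hi, rfl⟩
    refine II_pow_mem hroot _ (n - 1) hT ?_ hyI
    intro j hj
    unfold zt
    refine sum_mem fun i _ => ?_
    rw [← Algebra.smul_def]
    exact Submodule.smul_mem _ _ (hT _ (by omega))
  have hv : ∃ v : S[X], v.natDegree ≤ n - 1 ∧ y = Polynomial.aeval θ v := by
    clear hyI hyA hy2
    clear_value y
    clear hy
    induction hyT using Submodule.span_induction with
    | mem x hx =>
      obtain ⟨i, hi, rfl⟩ := hx
      exact ⟨Polynomial.X ^ i, (Polynomial.natDegree_X_pow_le i).trans hi, by simp⟩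
    | zero => exact ⟨0, by simp, by simp⟩
    | add x z _ _ h1 h2 =>
      obtain ⟨v, hv, hv'⟩ := h1
      obtain ⟨u, hu, hu'⟩ := h2
      exact ⟨v + u, Polynomial.natDegree_add_le_of_degree_le hv hu, by rw [map_add, hv', hu']⟩
    | smul a x _ h1 =>
      obtain ⟨v, hv, hv'⟩ := h1
      exact ⟨a • v, (Polynomial.natDegree_smul_le a v).trans hv, by rw [map_smul, hv']⟩
  obtain ⟨v, hv, hyv⟩ := hv
  have hz0 : Polynomial.aeval θ (w - Polynomial.C π * v) = 0 := by
    rw [map_sub, map_mul, Polynomial.aeval_C, ← hyv, hy]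
    linear_combination (-Polynomial.aeval θ w) * hϖπ
  have hzero : w - Polynomial.C π * v = 0 := by
    rw [hθ, aeval_θF, AdjoinRoot.mk_eq_zero] at hz0
    have hdeg : ((w - Polynomial.C π * v).map (algebraMap S F)).natDegree ≤ n - 1 :=
      (Polynomial.natDegree_map_le).trans
        ((Polynomial.natDegree_sub_le_of_le hw ((Polynomial.natDegree_C_mul_le _ _).trans hv)).trans
          (by simp))
    have := Polynomial.eq_zero_of_dvd_of_natDegree_lt hz0
      (by rw [binPoly_natDegree hinj n c hc]; omega)
    exact (Polynomial.map_eq_zero_iff hinj).1 this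
  rw [sub_eq_zero.1 hzero, Polynomial.coeff_C_mul]
  exact dvd_mul_right _ _

end Aux4
section Aux5

lemma FP_map {S T : Type} [CommRing S] [CommRing T] (φ : S →+* T) (n : ℕ) (c : ℕ → S) :
    (FP n c).map φ = FP n (fun i => φ (c i)) := by
  unfold FP; simp [Polynomial.map_sum]

lemma nonmaxZ (p : ℕ) [Fact p.Prime] {n : ℕ} (hn : 1 ≤ n) {c : ℕ → ℤ}
    (hc : c 0 ≠ 0) (g : ℕ → ℤ) (hg : ∑ i ∈ Finset.range (n + 1), g i * c i = 1)
    (hmax : IsMaxOrder ℤ_[p] ℚ_[p] n (castP p c)) {w b d : ℤ[X]}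
    (hw : w.natDegree ≤ n - 1) (hb : b.natDegree ≤ n - 1)
    (hd : d.natDegree ≤ (n - 1) + (n - 1))
    (hrel : FP n c ∣ w ^ 2 - (Polynomial.C (p : ℤ) * b * w + Polynomial.C (p : ℤ) ^ 2 * d)) (i : ℕ) :
    (p : ℤ) ∣ w.coeff i := by
  have h := nonmax (F := ℚ_[p]) (IsFractionRing.injective ℤ_[p] ℚ_[p]) hn (c := castP p c)
    (by simpa [castP] using hc) (fun i => (g i : ℤ_[p]))
    (by simpa [castP] using congrArg (Int.cast : ℤ → ℤ_[p]) hg) hmax (π := (p : ℤ_[p]))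
    (by exact_mod_cast (Fact.out : p.Prime).ne_zero)
    (w := w.map (Int.castRingHom _)) (b := b.map (Int.castRingHom _))
    (d := d.map (Int.castRingHom _))
    (Polynomial.natDegree_map_le.trans hw) (Polynomial.natDegree_map_le.trans hb)
    (Polynomial.natDegree_map_le.trans hd)
    (by
      have := Polynomial.map_dvd (Int.castRingHom ℤ_[p]) hrel
      rw [FP_map] at this
      have hC : (Polynomial.C (p : ℤ)).map (Int.castRingHom ℤ_[p]) =
        Polynomial.C (p : ℤ_[p]) := by rw [Polynomial.map_C, eq_intCast, Int.cast_natCast]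
      have hF : (fun i => (Int.castRingHom ℤ_[p]) (c i)) = castP p c := by
        funext i; rw [eq_intCast, castP]
      rw [hF, Polynomial.map_sub, Polynomial.map_add, Polynomial.map_mul, Polynomial.map_mul,
        Polynomial.map_mul, Polynomial.map_pow, Polynomial.map_pow, hC] at this
      exact this) i
  rw [Polynomial.coeff_map, eq_intCast] at h
  rw [← PadicInt.norm_int_lt_one_iff_dvd, PadicInt.norm_lt_one_iff_dvd]
  exact h

/-- if `p² ∣ f₀` then `p ∤ f₁`. -/
lemma stepA (p : ℕ) [Fact p.Prime] {n : ℕ} (hn : 2 ≤ n) {c : ℕ → ℤ}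
    (hc : c 0 ≠ 0) (g : ℕ → ℤ) (hg : ∑ i ∈ Finset.range (n + 1), g i * c i = 1)
    (hmax : IsMaxOrder ℤ_[p] ℚ_[p] n (castP p c)) (hp2 : (p : ℤ) ^ 2 ∣ c 0) :
    ¬ (p : ℤ) ∣ c 1 := by
  rintro ⟨e, he⟩
  obtain ⟨m, hm⟩ := hp2
  set w : ℤ[X] := FP n c - Polynomial.C (c 0) * Polynomial.X ^ n with hw
  set a : ℤ[X] := w - Polynomial.C (c 1) * Polynomial.X ^ (n - 1) with ha
  have hwc : ∀ j, w.coeff j = if j < n then c (n - j) else 0 := by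
    intro j
    rw [hw, Polynomial.coeff_sub, FP_coeff, Polynomial.coeff_C_mul_X_pow]
    rcases lt_trichotomy j n with h | h | h
    · rw [if_pos h.le, if_neg h.ne, if_pos h, sub_zero]
    · subst h; simp
    · rw [if_neg (by omega), if_neg (by omega), if_neg (by omega), sub_zero]
  have hwd : w.natDegree ≤ n - 1 := by
    rw [Polynomial.natDegree_le_iff_coeff_eq_zero]
    intro N hN
    rw [hwc, if_neg (by omega)]
  have had : a.natDegree ≤ n - 2 := by
    rw [Polynomial.natDegree_le_iff_coeff_eq_zero]
    intro N hN
    rw [ha, Polynomial.coeff_sub, hwc, Polynomial.coeff_C_mul_X_pow]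
    by_cases h : N = n - 1
    · subst h
      rw [if_pos (by omega), if_pos rfl, show n - (n - 1) = 1 by omega, sub_self]
    · rw [if_neg (by omega), if_neg h, sub_zero]
  have key := nonmaxZ p (by omega) hc g hg hmax (w := w)
    (b := Polynomial.C e * Polynomial.X ^ (n - 1))
    (d := -(Polynomial.C m * a * Polynomial.X ^ n)) hwd
    (Polynomial.natDegree_C_mul_X_pow_le _ _)
    (by
      rw [Polynomial.natDegree_neg]
      refine (Polynomial.natDegree_mul_le_of_le ((Polynomial.natDegree_C_mul_le _ _).trans had)
        (Polynomial.natDegree_X_pow_le n)).trans ?_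
      omega)
    (by
      refine ⟨a, ?_⟩
      have h1 : Polynomial.C (c 1) = Polynomial.C (p : ℤ) * Polynomial.C e := by
        rw [he, Polynomial.C_mul]
      have h0 : Polynomial.C (c 0) = Polynomial.C (p : ℤ) ^ 2 * Polynomial.C m := by
        rw [hm, Polynomial.C_mul, Polynomial.C_pow]
      have hF : FP n c = w + Polynomial.C (c 0) * Polynomial.X ^ n := by rw [hw]; ring
      have haw : w = a + Polynomial.C (p : ℤ) * Polynomial.C e * Polynomial.X ^ (n - 1) := by
        rw [ha, h1]; ring
      rw [hF, h0]
      clear_value a w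
      clear hw hwd hwc hF
      subst haw
      ring)
  have hall : ∀ i ∈ Finset.range (n + 1), (p : ℤ) ∣ g i * c i := by
    intro i hi
    have hi' : i < n + 1 := Finset.mem_range.1 hi
    refine Dvd.dvd.mul_left ?_ _
    rcases Nat.eq_zero_or_pos i with rfl | h
    · exact ⟨p * m, by rw [hm]; ring⟩
    · have := key (n - i)
      rwa [hwc, if_pos (by omega), show n - (n - i) = i by omega] at this
  have := Finset.dvd_sum hall
  rw [hg] at this
  exact (Nat.prime_iff_prime_int.1 (Fact.out : p.Prime)).not_dvd_one this

lemma exists_lift (p : ℕ) [Fact p.Prime] (q : (ZMod p)[X]) :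
    ∃ Q : ℤ[X], Q.map (Int.castRingHom (ZMod p)) = q ∧ Q.natDegree = q.natDegree :=
  Polynomial.exists_natDegree_eq_of_mem_lifts
    (Polynomial.mem_lifts_of_surjective ZMod.intCast_surjective q)

lemma exists_div (p : ℕ) [Fact p.Prime] (q : ℤ[X]) (hq : q.map (Int.castRingHom (ZMod p)) = 0) :
    ∃ Q : ℤ[X], q = Polynomial.C (p : ℤ) * Q ∧ Q.natDegree = q.natDegree := by
  have hp : (p : ℤ) ≠ 0 := by exact_mod_cast (Fact.out : p.Prime).ne_zero
  have : Polynomial.C (p : ℤ) ∣ q := by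
    rw [Polynomial.C_dvd_iff_dvd_coeff]
    intro i
    have := congrArg (fun r => Polynomial.coeff r i) hq
    simp only [Polynomial.coeff_map, eq_intCast, Polynomial.coeff_zero] at this
    exact (ZMod.intCast_zmod_eq_zero_iff_dvd _ _).1 this
  obtain ⟨Q, rfl⟩ := this
  exact ⟨Q, rfl, (Polynomial.natDegree_C_mul hp).symm⟩

lemma coprime_aux (p : ℕ) [Fact p.Prime] {n s : ℕ} (hns : n = 2 * s + 1) (hs : 1 ≤ s) {c : ℕ → ℤ}
    (hc : c 0 ≠ 0) (g : ℕ → ℤ) (hg : ∑ i ∈ Finset.range (n + 1), g i * c i = 1)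
    (hmax : IsMaxOrder ℤ_[p] ℚ_[p] n (castP p c)) {u : ℤ} {G E : ℤ[X]}
    (hG : G.natDegree ≤ s) (hE : E.natDegree ≤ n)
    (hrel : Polynomial.C u * FP n c = G ^ 2 + Polynomial.C (p : ℤ) * E)
    (hG0 : G.map (Int.castRingHom (ZMod p)) ≠ 0) :
    IsCoprime (G.map (Int.castRingHom (ZMod p))) (E.map (Int.castRingHom (ZMod p))) := by
  set φ := Int.castRingHom (ZMod p) with hφ
  refine isCoprime_of_irreducible_dvd (fun h => hG0 h.1) ?_
  rintro h' hirr ⟨g1, hg1⟩ ⟨e1, he1⟩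
  obtain ⟨h, hh, hhd⟩ := exists_lift p h'
  obtain ⟨γ, hγ, hγd⟩ := exists_lift p g1
  obtain ⟨e, he, hed⟩ := exists_lift p e1
  rw [← hφ] at hh hγ he
  have hh0 : h' ≠ 0 := hirr.ne_zero
  have hg10 : g1 ≠ 0 := by rintro rfl; exact hG0 (by rw [hg1, mul_zero])
  have hm : 0 < h'.natDegree := hirr.natDegree_pos
  have hdeg1 : h.natDegree + γ.natDegree ≤ s := by
    rw [hhd, hγd, ← Polynomial.natDegree_mul hh0 hg10, ← hg1]
    exact Polynomial.natDegree_map_le.trans hG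
  have hdeg2 : e.natDegree + 1 ≤ n := by
    rw [hed]
    by_cases h0 : e1 = 0
    · rw [h0, Polynomial.natDegree_zero]; omega
    · have := Polynomial.natDegree_mul hh0 h0
      rw [← he1] at this
      have h2 := (Polynomial.natDegree_map_le (f := φ) (p := E)).trans hE
      omega
  have hdeg3 : (h * e).natDegree ≤ n := by
    by_cases h0 : e1 = 0
    · have : e.natDegree = 0 := by rw [hed, h0, Polynomial.natDegree_zero]
      refine Polynomial.natDegree_mul_le.trans ?_
      omega
    · have := Polynomial.natDegree_mul hh0 h0
      rw [← he1] at this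
      have h2 := (Polynomial.natDegree_map_le (f := φ) (p := E)).trans hE
      refine Polynomial.natDegree_mul_le.trans ?_
      omega
  obtain ⟨γ', hγ', hγ'd⟩ := exists_div p (G - h * γ) (by
    rw [Polynomial.map_sub, Polynomial.map_mul, ← hφ, hh, hγ, hg1, sub_self])
  obtain ⟨e', he', he'd⟩ := exists_div p (E - h * e) (by
    rw [Polynomial.map_sub, Polynomial.map_mul, ← hφ, hh, he, he1, sub_self])
  have hγ's : γ'.natDegree ≤ s := by
    rw [hγ'd]
    exact (Polynomial.natDegree_sub_le_of_le hG (Polynomial.natDegree_mul_le.trans hdeg1)).trans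
      (by simp)
  have he'n : e'.natDegree ≤ n := by
    rw [he'd]
    exact (Polynomial.natDegree_sub_le_of_le hE hdeg3).trans (by simp)
  have hγs : γ.natDegree ≤ s - 1 := by omega
  have hb : (2 * γ * γ' + e).natDegree ≤ n - 1 := by
    refine Polynomial.natDegree_add_le_of_degree_le ?_ (by omega)
    refine (Polynomial.natDegree_mul_le_of_le (m := s - 1) (n := s) ?_ hγ's).trans (by omega)
    have : (2 : ℤ[X]) = Polynomial.C 2 := by simp
    rw [this]
    exact (Polynomial.natDegree_C_mul_le _ _).trans hγs
  have hw : (h * γ ^ 2 + Polynomial.C (p : ℤ) * (2 * γ * γ' + e)).natDegree ≤ n - 1 := by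
    refine Polynomial.natDegree_add_le_of_degree_le ?_
      ((Polynomial.natDegree_C_mul_le _ _).trans hb)
    rw [pow_two, ← mul_assoc]
    refine (Polynomial.natDegree_mul_le_of_le (m := s) (n := s - 1) ?_ hγs).trans (by omega)
    exact Polynomial.natDegree_mul_le.trans hdeg1
  have hd : (-(γ ^ 2 * (γ' ^ 2 + e'))).natDegree ≤ (n - 1) + (n - 1) := by
    rw [Polynomial.natDegree_neg]
    refine (Polynomial.natDegree_mul_le_of_le (m := 2 * (s - 1)) (n := n)
      (Polynomial.natDegree_pow_le_of_le 2 hγs)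
      (Polynomial.natDegree_add_le_of_degree_le ?_ he'n)).trans (by omega)
    exact (Polynomial.natDegree_pow_le_of_le 2 hγ's).trans (by omega)
  have key := nonmaxZ p (by omega) hc g hg hmax hw hb hd (by
    refine ⟨Polynomial.C u * γ ^ 2, ?_⟩
    have hG' : G = h * γ + Polynomial.C (p : ℤ) * γ' := by rw [← hγ']; ring
    have hE' : E = h * e + Polynomial.C (p : ℤ) * e' := by rw [← he']; ring
    have : FP n c * (Polynomial.C u * γ ^ 2) =
      γ ^ 2 * (G ^ 2 + Polynomial.C (p : ℤ) * E) := by rw [← hrel]; ring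
    rw [this, hG', hE']
    ring)
  have h0 : (h * γ ^ 2 + Polynomial.C (p : ℤ) * (2 * γ * γ' + e)).map φ = 0 := by
    ext i
    rw [Polynomial.coeff_map, Polynomial.coeff_zero, hφ, eq_intCast]
    exact (ZMod.intCast_zmod_eq_zero_iff_dvd _ _).2 (key i)
  have hpz : φ (p : ℤ) = 0 := by simp [hφ]
  rw [Polynomial.map_add, Polynomial.map_mul, Polynomial.map_mul, Polynomial.map_pow, hh, hγ,
    Polynomial.map_C, hpz, Polynomial.C_0, zero_mul, add_zero] at h0
  exact mul_ne_zero hh0 (pow_ne_zero 2 hg10) h0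

lemma squareful_poly (p : ℕ) [Fact p.Prime] {n : ℕ} {c : ℕ → ℤ}
    (hsq : SquarefulP p n (castP p c)) :
    ∃ (κ : (ZMod p)ˣ) (H : (ZMod p)[X]),
      (FP n c).map (Int.castRingHom (ZMod p)) = Polynomial.C (κ : ZMod p) * H ^ 2 := by
  obtain ⟨κ, e, d, H, -, -, -, h⟩ := hsq
  refine ⟨κ, MvPolynomial.aeval ![Polynomial.X, 1] H, ?_⟩
  have := congrArg (MvPolynomial.aeval (R := ZMod p) ![(Polynomial.X : (ZMod p)[X]), 1]) h
  unfold redForm castP at this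
  rw [FP_map]
  unfold FP
  simpa [Polynomial.algebraMap_eq] using this

lemma bez_of_not_dvd {p : ℕ} (hp : p.Prime) {a : ℤ} (ha : ¬ (p : ℤ) ∣ a) :
    ∃ x y : ℤ, x * a + y * p = 1 :=
  ((Nat.prime_iff_prime_int.1 hp).irreducible.coprime_iff_not_dvd.2 ha).symm

lemma stepB {O L : Type} [CommRing O] [CommRing L] [Algebra O L]
    (p : ℕ) [Fact p.Prime] {n s : ℕ} (hns : n = 2 * s + 1) (hs : 1 ≤ s) {c : ℕ → ℤ}
    (hc : c 0 ≠ 0) (g : ℕ → ℤ) (hg : ∑ i ∈ Finset.range (n + 1), g i * c i = 1)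
    (hmax : IsMaxOrder ℤ_[p] ℚ_[p] n (castP p c)) (hpc : (p : ℤ) ∣ c 0)
    (hsq : SquarefulP p n (castP p c)) {θ : L} (h : RootOf n c θ)
    (hz : ∀ i ≤ n, zt c θ i ∈ (1 : Submodule O L)) (hAI : AI O n c θ * II O θ = 1) :
    ∃ Q : Submodule O L, Q * Q * Ad O n c θ (p : ℤ) =
      Submodule.span O {algebraMap ℤ L (p : ℤ)} := by
  have hp : p.Prime := Fact.out
  have hpI := Nat.prime_iff_prime_int.1 hp
  obtain ⟨κ, H, hκ⟩ := squareful_poly p hsq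
  -- some coefficient is prime to `p`
  have hj : ∃ j, 1 ≤ j ∧ j ≤ n ∧ ¬ (p : ℤ) ∣ c j := by
    by_contra hcon
    push Not at hcon
    have hall : ∀ i ∈ Finset.range (n + 1), (p : ℤ) ∣ g i * c i := by
      intro i hi
      have hi' : i < n + 1 := Finset.mem_range.1 hi
      refine Dvd.dvd.mul_left ?_ _
      rcases Nat.eq_zero_or_pos i with rfl | h
      · exact hpc
      · exact hcon i h (by omega)
    have := Finset.dvd_sum hall
    rw [hg] at this
    exact hpI.not_dvd_one this
  set φ := Int.castRingHom (ZMod p) with hφ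
  have hF0 : (FP n c).map φ ≠ 0 := by
    intro h0
    obtain ⟨j, hj1, hj2, hj3⟩ := hj
    have := congrArg (fun r => Polynomial.coeff r (n - j)) h0
    simp only [Polynomial.coeff_map, hφ, eq_intCast, Polynomial.coeff_zero] at this
    rw [ZMod.intCast_zmod_eq_zero_iff_dvd, FP_coeff, if_pos (by omega),
      show n - (n - j) = j by omega] at this
    exact hj3 this
  have hH0 : H ≠ 0 := by rintro rfl; apply hF0; rw [hκ]; simp
  have hHs : H.natDegree ≤ s := by
    have h1 : ((FP n c).map φ).natDegree ≤ n - 1 := by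
      rw [Polynomial.natDegree_le_iff_coeff_eq_zero]
      intro N hN
      rw [Polynomial.coeff_map, FP_coeff]
      by_cases hNn : N ≤ n
      · obtain rfl : N = n := by omega
        rw [if_pos le_rfl, Nat.sub_self, hφ, eq_intCast, ZMod.intCast_zmod_eq_zero_iff_dvd]
        exact hpc
      · rw [if_neg hNn, map_zero]
    rw [hκ, Polynomial.natDegree_C_mul κ.ne_zero, Polynomial.natDegree_pow] at h1
    omega
  obtain ⟨G, hG, hGd⟩ := exists_lift p H
  obtain ⟨u, hu⟩ := ZMod.intCast_surjective ((κ⁻¹ : (ZMod p)ˣ) : ZMod p)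
  rw [← hφ] at hG
  have hup : ¬ (p : ℤ) ∣ u := by
    rw [← ZMod.intCast_zmod_eq_zero_iff_dvd, hu]
    exact Units.ne_zero _
  have hGs : G.natDegree ≤ s := by rw [hGd]; exact hHs
  obtain ⟨E, hE, hEd⟩ := exists_div p (Polynomial.C u * FP n c - G ^ 2) (by
    rw [Polynomial.map_sub, Polynomial.map_mul, Polynomial.map_pow, ← hφ, hG, hκ, Polynomial.map_C,
      hφ, eq_intCast, hu, ← mul_assoc, ← Polynomial.C_mul, Units.inv_mul, Polynomial.C_1, one_mul,
      sub_self])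
  have hEn : E.natDegree ≤ n := by
    rw [hEd]
    refine (Polynomial.natDegree_sub_le_of_le (m := n) (n := n)
      ((Polynomial.natDegree_C_mul_le _ _).trans (FP_natDegree_le n c))
      ((Polynomial.natDegree_pow_le_of_le 2 hGs).trans (by omega))).trans (by simp)
  have hrel : Polynomial.C u * FP n c = G ^ 2 + Polynomial.C (p : ℤ) * E := by rw [← hE]; ring
  have hpe : (p : ℤ) * E.coeff n = u * c 0 := by
    have := congrArg (fun r => Polynomial.coeff r n) hrel
    simp only [Polynomial.coeff_C_mul, Polynomial.coeff_add] at this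
    rw [FP_coeff, if_pos le_rfl, Nat.sub_self, Polynomial.coeff_eq_zero_of_natDegree_lt
      (lt_of_le_of_lt (Polynomial.natDegree_pow_le_of_le 2 hGs) (by omega)), zero_add] at this
    exact this.symm
  have hcop := coprime_aux p hns hs hc g hg hmax hGs hEn hrel (by rw [← hφ, hG]; exact hH0)
  obtain ⟨U', V', hUV⟩ := hcop
  obtain ⟨U, hU, -⟩ := exists_lift p U'
  obtain ⟨V, hV, -⟩ := exists_lift p V'
  obtain ⟨W, hW, -⟩ := exists_div p (U * G + V * E - 1) (by
    rw [Polynomial.map_sub, Polynomial.map_add, Polynomial.map_mul, Polynomial.map_mul, hU, hV, hUV,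
      Polynomial.map_one, sub_self])
  refine exists_sqrt hns h hz hAI (p := (p : ℤ)) (u := u) hGs hEn hrel
    (U := U) (V := V) (W := W) (by rw [← hW]; ring) hpe ?_
  by_cases hEp : (p : ℤ) ∣ E.coeff n
  · right
    have hp2 : (p : ℤ) ^ 2 ∣ c 0 := by
      obtain ⟨t, ht⟩ := hEp
      have h1 : (p : ℤ) ^ 2 ∣ u * c 0 := ⟨t, by rw [← hpe, ht]; ring⟩
      exact IsCoprime.dvd_of_dvd_mul_left
        (((hpI.irreducible.coprime_iff_not_dvd.2 hup)).pow_left) h1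
    have h1 := stepA p (by omega) hc g hg hmax hp2
    refine bez_of_not_dvd hp fun hdiv => ?_
    rcases hpI.dvd_or_dvd hdiv with h2 | h2
    · exact hup h2
    · exact h1 ((dvd_neg).1 (hpI.dvd_of_dvd_pow h2))
  · left
    obtain ⟨j, hj1, hj2, hj3⟩ := hj
    refine ⟨j, hj1, hj2, bez_of_not_dvd hp fun hdiv => ?_⟩
    rcases hpI.dvd_or_dvd hdiv with h2 | h2
    · exact hEp h2
    · exact hj3 ((dvd_neg).1 (hpI.dvd_of_dvd_pow h2))

end Aux5
section Aux6

variable {O L : Type} [CommRing O] [CommRing L] [Algebra O L]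

lemma Ad_one {n : ℕ} {c : ℕ → ℤ} {θ : L}
    (hz : ∀ i ≤ n, zt c θ i ∈ (1 : Submodule O L)) : Ad O n c θ 1 = 1 := by
  refine le_antisymm (Ad_le_one hz) ?_
  rw [one_le_iff']
  have := d_mem_Ad (O := O) (n := n) (c := c) (θ := θ) (d := (1 : ℤ))
  rwa [map_one] at this

lemma stepC {n : ℕ} (hn : 2 ≤ n) {c : ℕ → ℤ} {θ : L} (h : RootOf n c θ)
    (hz : ∀ i ≤ n, zt c θ i ∈ (1 : Submodule O L)) (d : ℕ) (hd : Squarefree d)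
    (hdc : (d : ℤ) ∣ c 0)
    (hp : ∀ p : ℕ, p.Prime → p ∣ d → ∃ Q : Submodule O L, Q * Q * Ad O n c θ (p : ℤ) =
      Submodule.span O {algebraMap ℤ L (p : ℤ)}) :
    ∃ Q : Submodule O L, Q * Q * Ad O n c θ (d : ℤ) =
      Submodule.span O {algebraMap ℤ L (d : ℤ)} := by
  induction d using induction_on_primes with
  | zero => exact absurd hd not_squarefree_zero
  | one =>
    refine ⟨1, ?_⟩
    rw [Nat.cast_one, Ad_one hz, map_one, one_mul, one_mul, Submodule.one_eq_span]
  | prime_mul p a hpp ih =>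
    obtain ⟨hcop, -, hda⟩ := Nat.squarefree_mul_iff.1 hd
    obtain ⟨Q1, hQ1⟩ := hp p hpp (dvd_mul_right _ _)
    obtain ⟨Q2, hQ2⟩ := ih hda ((Int.natCast_dvd_natCast.2 (dvd_mul_left _ _)).trans hdc)
      (fun q hq hqa => hp q hq (hqa.mul_left _))
    obtain ⟨x, y, hxy⟩ := Nat.isCoprime_iff_coprime.2 hcop
    have e := Ad_mul_Ad (O := O) hn h hz (d := (p : ℤ)) (d' := (a : ℤ)) (by exact_mod_cast hdc)
      (x := x) (y := y) (t := 0) (by rw [hxy]; ring)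
    refine ⟨Q1 * Q2, ?_⟩
    have e2 : Submodule.span O {algebraMap ℤ L (p : ℤ)} * Submodule.span O {algebraMap ℤ L (a : ℤ)}
      = Submodule.span O {algebraMap ℤ L ((p * a : ℕ) : ℤ)} := by
      rw [Submodule.span_mul_span, Set.singleton_mul_singleton, ← map_mul, Nat.cast_mul]
    rw [Nat.cast_mul, ← e, ← Nat.cast_mul, ← e2, ← hQ1, ← hQ2]
    ring

lemma stepD {n r : ℕ} (hn : n = 2 * r + 3) {c : ℕ → ℤ} {θ : L} (h : RootOf n c θ)
    (hz : ∀ i ≤ n, zt c θ i ∈ (1 : Submodule O L)) (hAI : AI O n c θ * II O θ = 1)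
    {K m : ℤ} (h1 : K * (m * m) ∣ c 0) (h2 : c 0 ∣ K * (m * m)) (hm : IsCoprime m (c 1))
    {Q : Submodule O L} (hQ : Q * Q * Ad O n c θ K = Submodule.span O {algebraMap ℤ L K})
    {κ : L} (hκ : algebraMap ℤ L K * κ = 1) :
    ∃ J N : Submodule O L, J * N = 1 ∧
      J * J = Submodule.span O {algebraMap ℤ L K} * II O θ ^ (n - 2) := by
  obtain ⟨x, t, hxt⟩ := hm
  have e1 : Ad O n c θ m * Ad O n c θ m = Ad O n c θ (m * m) :=
    Ad_mul_Ad (by omega) h hz ((dvd_mul_left _ _).trans h1) (x := x) (y := 0) (t := t)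
      (by linear_combination hxt)
  obtain ⟨x', t', hxt'⟩ : IsCoprime (m * m) (c 1) :=
    IsCoprime.mul_left ⟨x, t, hxt⟩ ⟨x, t, hxt⟩
  have e2 : Ad O n c θ K * Ad O n c θ (m * m) = Ad O n c θ (K * (m * m)) :=
    Ad_mul_Ad (by omega) h hz h1 (x := 0) (y := x') (t := t') (by linear_combination hxt')
  have e3 : Ad O n c θ (K * (m * m)) = AI O n c θ := by
    refine le_antisymm ?_ AI_le_Ad
    unfold Ad
    rw [Submodule.add_eq_sup]
    refine sup_le ?_ le_rfl
    rw [Submodule.span_le, Set.singleton_subset_iff]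
    obtain ⟨q, hq⟩ := h2
    rw [hq, mul_comm, map_mul]
    exact one_mul_mem (alg_mem_one _) (c0_mem_AI (by omega))
  have hJ : (II O θ ^ r * Q * Ad O n c θ K * Ad O n c θ m * II O θ) *
      (II O θ ^ r * Q * Ad O n c θ K * Ad O n c θ m * II O θ) =
      Submodule.span O {algebraMap ℤ L K} * II O θ ^ (n - 2) := by
    calc _ = (Q * Q * Ad O n c θ K) * II O θ ^ (2 * r + 1) *
        ((Ad O n c θ K * (Ad O n c θ m * Ad O n c θ m)) * II O θ) := by ring
      _ = _ := by
        rw [hQ, e1, e2, e3, hAI, mul_one, show n - 2 = 2 * r + 1 by omega]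
  refine ⟨_, (II O θ ^ r * Q * Ad O n c θ K * Ad O n c θ m * II O θ) *
    (Submodule.span O {κ} * AI O n c θ ^ (n - 2)), ?_, hJ⟩
  rw [← mul_assoc, hJ]
  have e4 : Submodule.span O {algebraMap ℤ L K} * Submodule.span O {κ} = 1 := by
    rw [Submodule.span_mul_span, Set.singleton_mul_singleton, hκ, Submodule.one_eq_span]
  calc _ = (Submodule.span O {algebraMap ℤ L K} * Submodule.span O {κ}) *
      (AI O n c θ * II O θ) ^ (n - 2) := by ring
    _ = 1 := by rw [e4, hAI, one_pow, one_mul]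

end Aux6

section Aux7

lemma IFmod_eq {n : ℕ} (hn : 2 ≤ n) (c : ℕ → ℤ) :
    IFmod ℤ ℚ n c (n - 2) =
      (II (OS n c (θF ℤ ℚ n c)) (θF ℤ ℚ n c) ^ (n - 2)).restrictScalars ℤ := by
  have hθ : ∀ i ≤ n - 2, θF ℤ ℚ n c ^ i ∈ IFmod ℤ ℚ n c (n - 2) := fun i hi =>
    Submodule.subset_span (Or.inl ⟨i, hi, rfl⟩)
  have hθ2 : ∀ i ≤ n - 2, θF ℤ ℚ n c ^ i ∈
      II (OS n c (θF ℤ ℚ n c)) (θF ℤ ℚ n c) ^ (n - 2) := fun i hi => by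
    have := aeval_mem_II (O := OS n c (θF ℤ ℚ n c)) (θ := θF ℤ ℚ n c)
      (Polynomial.X ^ i : ℤ[X]) ((Polynomial.natDegree_X_pow_le i).trans hi)
    simpa using this
  apply le_antisymm
  · unfold IFmod
    rw [Submodule.span_le]
    rintro _ (⟨j, hj, rfl⟩ | ⟨i, hi1, hi2, rfl⟩)
    · exact hθ2 j hj
    · show ζF ℤ ℚ n c i ∈ II (OS n c (θF ℤ ℚ n c)) (θF ℤ ℚ n c) ^ (n - 2)
      have h1 := one_mul_mem (O := OS n c (θF ℤ ℚ n c)) (mem_one_OS.2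
        (zt_mem_OS (n := n) (c := c) (θ := θF ℤ ℚ n c) (i := i) (by omega))) (hθ2 0 (by omega))
      rw [pow_zero, mul_one] at h1
      exact h1
  · intro x hx
    refine II_pow_mem (root_θF n c) _ (n - 2) hθ ?_ hx
    intro j hj
    by_cases hj2 : j ≤ n - 2
    · unfold zt
      refine sum_mem fun i _ => ?_
      rw [← Algebra.smul_def]
      exact Submodule.smul_mem _ _ (hθ _ (by omega))
    · exact Submodule.subset_span (Or.inr ⟨j, by omega, by omega, rfl⟩)

lemma span_rs {n : ℕ} {c : ℕ → ℤ} (α : KF ℤ ℚ n c)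
    (M : Submodule (OS n c (θF ℤ ℚ n c)) (KF ℤ ℚ n c)) :
    (Submodule.span (OS n c (θF ℤ ℚ n c)) {α} * M).restrictScalars ℤ =
      Submodule.span ℤ {α} * M.restrictScalars ℤ := by
  ext x
  rw [Submodule.restrictScalars_mem, Submodule.mem_span_singleton_mul,
    Submodule.mem_span_singleton_mul]
  rfl

lemma stable_rs {n : ℕ} {c : ℕ → ℤ}
    (M : Submodule (OS n c (θF ℤ ℚ n c)) (KF ℤ ℚ n c)) :
    IsStable ℤ ℚ n c (M.restrictScalars ℤ) := by
  intro ρ hρ x hx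
  rw [← OS_RFmod] at hρ
  exact one_mul_mem (O := OS n c (θF ℤ ℚ n c)) (M := M) (mem_one_OS.2 hρ) hx

lemma one_rs {n : ℕ} {c : ℕ → ℤ} :
    (1 : Submodule (OS n c (θF ℤ ℚ n c)) (KF ℤ ℚ n c)).restrictScalars ℤ = RFmod ℤ ℚ n c := by
  rw [← OS_RFmod]
  ext x
  exact mem_one_OS

lemma exists_bez {n : ℕ} {f : Fin (n + 1) → ℤ} (h : PrimZ n f) :
    ∃ g : ℕ → ℤ, ∑ i ∈ Finset.range (n + 1), g i * fpad n f i = 1 := by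
  have h1 : Ideal.span (Set.range f) = ⊤ := by
    obtain ⟨a, ha⟩ := (IsPrincipalIdealRing.principal (Ideal.span (Set.range f))).principal
    have ha' : Ideal.span (Set.range f) = Ideal.span {a} := ha
    rw [ha', Ideal.span_singleton_eq_top]
    refine isUnit_of_dvd_unit ?_ h
    refine Finset.dvd_gcd fun i _ => ?_
    rw [← Ideal.mem_span_singleton, ← ha']
    exact Ideal.subset_span ⟨i, rfl⟩
  have h2 : (1 : ℤ) ∈ Ideal.span (Set.range f) := by rw [h1]; trivial
  rw [Ideal.span, Submodule.mem_span_range_iff_exists_fun] at h2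
  obtain ⟨g, hg⟩ := h2
  refine ⟨fpad n g, ?_⟩
  rw [← hg, Finset.sum_range]
  refine Finset.sum_congr rfl fun i _ => ?_
  have hi : (i : ℕ) ≤ n := by omega
  simp [fpad, hi]

end Aux7

/-- Theorem 1.4: if `F` is primitive of odd degree `n` with odd leading
coefficient `f0`, `R_F ⊗ ℤ_p` is maximal for every `p ∣ f0`, and `F` is squareful over
`ℤ_p` for every `p ∣ k`, then the class of `I_F^{n-2}` (the class of the inverse different)
is a square in `Cl(R_F)`. -/
theorem inverse_different_is_square
    (n : ℕ) (hn : 3 ≤ n) (hodd : Odd n)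
    (f0 : ℤ) (hf0 : f0 ≠ 0) (hf0odd : Odd f0)
    (k : ℤ) (hksqfree : Squarefree k) (hkpart : ∃ m : ℤ, f0 = k * m ^ 2)
    (r1 r2 : ℕ) (hsig : r1 + 2 * r2 = n)
    (f : Fin (n + 1) → ℤ) (hlead : f 0 = f0)
    (hsep : SepSig n r1 f) (hprim : PrimZ n f)
    (hmax : ∀ (p : ℕ) [Fact p.Prime], (p : ℤ) ∣ f0 →
      IsMaxOrder ℤ_[p] ℚ_[p] n (castP p (fpad n f)))
    (hsq : ∀ (p : ℕ) [Fact p.Prime], (p : ℤ) ∣ k → SquarefulP p n (castP p (fpad n f))) :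
    ∃ J : Submodule ℤ (KF ℤ ℚ n (fpad n f)), IsInvIdeal ℤ ℚ n (fpad n f) J ∧
      ∃ α : KF ℤ ℚ n (fpad n f), IsUnit α ∧
        J * J = Submodule.span ℤ {α} * IFmod ℤ ℚ n (fpad n f) (n - 2) := by
  obtain ⟨m, hm⟩ := hkpart
  obtain ⟨g, hg⟩ := exists_bez hprim
  obtain ⟨s, hns⟩ := hodd
  set c := fpad n f with hcdef
  have hc0 : c 0 = f0 := by rw [hcdef, ← hlead]; simp [fpad]
  have hcne : c 0 ≠ 0 := by rw [hc0]; exact hf0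
  have hroot := root_θF (F := ℚ) n c
  set θ := θF ℤ ℚ n c with hθ
  have hz : ∀ i ≤ n, zt c θ i ∈ (1 : Submodule (OS n c θ) (KF ℤ ℚ n c)) := fun i hi =>
    mem_one_OS.2 (zt_mem_OS hi)
  have hAI : AI (OS n c θ) n c θ * II (OS n c θ) θ = 1 := AI_mul_II (by omega) hroot hz g hg
  have hk0 : k ≠ 0 := hksqfree.ne_zero
  have hkf : k ∣ f0 := ⟨m ^ 2, hm⟩
  have hKk : Associated ((k.natAbs : ℕ) : ℤ) k := Int.associated_natAbs k |>.symm
  have hcop : IsCoprime m (c 1) := by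
    refine isCoprime_of_prime_dvd ?_ ?_
    · rintro ⟨h0, -⟩
      apply hf0; rw [hm, h0]; ring
    · intro q hq hqm hqc
      have hqp : (q.natAbs).Prime := Int.prime_iff_natAbs_prime.1 hq
      have : Fact (q.natAbs).Prime := ⟨hqp⟩
      have h1 : ((q.natAbs : ℕ) : ℤ) ∣ m := Int.natAbs_dvd.2 hqm
      have h2 : ((q.natAbs : ℕ) : ℤ) ^ 2 ∣ f0 := by
        rw [hm]; exact (pow_dvd_pow_of_dvd h1 2).mul_left _
      exact stepA q.natAbs (by omega) hcne g hg
        (hmax q.natAbs ((dvd_pow_self _ two_ne_zero).trans h2)) (by rw [hc0]; exact h2)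
        (Int.natAbs_dvd.2 hqc)
  obtain ⟨Q, hQ⟩ := stepC (O := OS n c θ) (by omega) hroot hz k.natAbs
    (Int.squarefree_natAbs.2 hksqfree)
    (by rw [hc0]; exact hKk.dvd.trans hkf)
    (by
      intro p hp hpk
      have : Fact p.Prime := ⟨hp⟩
      have hpk' : (p : ℤ) ∣ k := Int.natCast_dvd.2 hpk
      exact stepB p hns (by omega) hcne g hg (hmax p (hpk'.trans hkf))
        (by rw [hc0]; exact hpk'.trans hkf) (hsq p hpk') hroot hz hAI)
  have hKm : Associated (((k.natAbs : ℕ) : ℤ) * (m * m)) (c 0) := by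
    rw [hc0, hm, pow_two]
    exact hKk.mul_right _
  have hKQ : ((k.natAbs : ℕ) : ℚ) ≠ 0 := by
    exact_mod_cast Int.natAbs_ne_zero.2 hk0
  have hκ : algebraMap ℤ (KF ℤ ℚ n c) ((k.natAbs : ℕ) : ℤ) *
      algebraMap ℚ (KF ℤ ℚ n c) (((k.natAbs : ℕ) : ℚ)⁻¹) = 1 := by
    rw [IsScalarTower.algebraMap_apply ℤ ℚ (KF ℤ ℚ n c), ← map_mul, map_natCast,
      mul_inv_cancel₀ hKQ, map_one]
  obtain ⟨J, N, hJN, hJJ⟩ := stepD (r := s - 1) (by omega) hroot hz hAI hKm.dvd hKm.symm.dvd hcop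
    hQ hκ
  refine ⟨J.restrictScalars ℤ, ⟨stable_rs J, N.restrictScalars ℤ, stable_rs N, ?_⟩,
    algebraMap ℤ (KF ℤ ℚ n c) ((k.natAbs : ℕ) : ℤ), IsUnit.of_mul_eq_one _ hκ, ?_⟩
  · rw [← rs_mul, hJN, one_rs]
  · rw [← rs_mul, hJJ, span_rs, IFmod_eq (by omega)]
    rfl


end BHS
end
end

section
/- Let p be a prime and F a separable primitive binary form of degree n ≥ 3 over ℤ_p with leading coefficient f_0 ≠ 0. If p > 2, then the map R_F^×/(R_F^×)² → ℤ_p^×/(ℤ_p^×)² induced by the norm N is surjective if and only if F is not evenly ramified. If p = 2, this map is surjective whenever R_F is maximal and F is not evenly ramified. -/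
open Polynomial Matrix MeasureTheory
open scoped Classical
noncomputable section
namespace BHS



/-! ### Binary forms and the rings they cut out, over a general base -/

variable (R K : Type) [CommRing R] [Field K] [Algebra R K]

/-! ### p-adic machinery -/

variable (p : ℕ) [Fact p.Prime]

/-- `W k F` is the polynomial quotient of `F` by `X^k`. -/
def W {A : Type*} [CommRing A] (k : ℕ) : A[X] →ₗ[A] A[X] where
  toFun F := divX^[k] F
  map_add' F G := by
    induction k generalizing F G with
    | zero => rfl
    | succ k ih => simp only [Function.iterate_succ, Function.comp, divX_add, ih]
  map_smul' a F := by
    induction k generalizing F with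
    | zero => rfl
    | succ k ih =>
      have : divX (a • F) = a • divX F := by ext i; simp [coeff_divX]
      simp only [Function.iterate_succ, Function.comp, this]; exact ih _

theorem W_coeff {A : Type*} [CommRing A] (k : ℕ) (F : A[X]) (i : ℕ) :
    (W k F).coeff i = F.coeff (i + k) := by
  change (divX^[k] F).coeff i = _
  induction k generalizing F i with
  | zero => rfl
  | succ k ih =>
    rw [Function.iterate_succ, Function.comp, ih, coeff_divX]; rfl

theorem W_map {A B : Type*} [CommRing A] [CommRing B] (φ : A →+* B) (k : ℕ) (F : A[X]) :
    W k (F.map φ) = (W k F).map φ := by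
  ext i; simp [W_coeff]

theorem W_X_pow_mul {A : Type*} [CommRing A] (k : ℕ) (F : A[X]) : W k (X ^ k * F) = F := by
  ext i; simp [W_coeff]

theorem W_X_pow_mul' {A : Type*} [CommRing A] (k i : ℕ) (h : i ≤ k) (F : A[X]) :
    W k (X ^ i * F) = W (k - i) F := by
  ext j
  rw [W_coeff, W_coeff, show j + k = (j + (k - i)) + i by omega, coeff_X_pow_mul]

theorem W_eq_zero {A : Type*} [CommRing A] (k : ℕ) (F : A[X]) (h : F.degree < k) : W k F = 0 := by
  ext j
  rw [W_coeff, coeff_zero]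
  apply coeff_eq_zero_of_degree_lt
  exact h.trans_le (by exact_mod_cast Nat.le_add_left k j)

/-- The part of `F` of degree less than `k`. -/
def U {A : Type*} [CommRing A] (k : ℕ) (F : A[X]) : A[X] := ∑ i ∈ Finset.range k, C (F.coeff i) * X ^ i

theorem U_coeff {A : Type*} [CommRing A] (k : ℕ) (F : A[X]) (j : ℕ) :
    (U k F).coeff j = if j < k then F.coeff j else 0 := by
  simp [U, coeff_X_pow, coeff_C_mul]

theorem U_degree {A : Type*} [CommRing A] (k : ℕ) (F : A[X]) : (U k F).degree < k := by
  rw [degree_lt_iff_coeff_zero]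
  intro m hm
  rw [U_coeff, if_neg (by omega)]

theorem U_add_W {A : Type*} [CommRing A] (k : ℕ) (F : A[X]) : U k F + X ^ k * W k F = F := by
  ext j
  rw [coeff_add, U_coeff, coeff_X_pow_mul', W_coeff]
  by_cases h : j < k
  · simp [h]
  · simp [h, Nat.le_of_not_lt h]

theorem W_mul {A : Type*} [CommRing A] (N : ℕ) (F q : A[X]) :
    W N (F * q) = ∑ i ∈ Finset.range N, C (q.coeff i) * W (N - i) F + F * W N q := by
  conv_lhs => rw [← U_add_W N q, mul_add, show F * (X ^ N * W N q) = X ^ N * (F * W N q) by ring,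
    map_add, W_X_pow_mul, U, Finset.mul_sum, map_sum]
  congr 1
  refine Finset.sum_congr rfl fun i hi => ?_
  rw [show F * (C (q.coeff i) * X ^ i) = q.coeff i • (X ^ i * F) by rw [smul_eq_C_mul]; ring,
    map_smul, W_X_pow_mul' _ _ (Finset.mem_range.1 hi).le, smul_eq_C_mul]

theorem W_mul_W {A : Type*} [CommRing A] (k l : ℕ) (F : A[X]) :
    W k F * W l F = W (k + l) (F * (F - U k F - U l F)) := by
  have hk := U_add_W k F
  have hl := U_add_W l F
  have e : F * (F - U k F - U l F) = X ^ (k + l) * (W k F * W l F) - U k F * U l F := by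
    linear_combination (exp := 1) (-F + U l F) * hk + (- X^k * W k F) * hl
  rw [e, map_sub, W_X_pow_mul, W_eq_zero (k + l) (U k F * U l F), sub_zero]
  refine (degree_mul_le _ _).trans_lt ?_
  have h1 := U_degree k F
  have h2 := U_degree l F
  rcases eq_or_ne (U k F) 0 with h | h
  · simp [h]
  rcases eq_or_ne (U l F) 0 with h' | h'
  · simp [h']
  rw [degree_eq_natDegree h, degree_eq_natDegree h'] at *
  norm_cast at *
  omega

/-- Matrix of multiplication by `W k F` on `1, X, …, X^(n-1)` modulo `F`. -/
def MatW {A : Type*} [CommRing A] (n : ℕ) (F : A[X]) (k : ℕ) : Matrix (Fin n) (Fin n) A :=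
  Matrix.of fun i j =>
    if (j : ℕ) < k then (if (j : ℕ) ≤ i then F.coeff (i + k - j) else 0)
    else (if (i : ℕ) < j ∧ (j : ℕ) ≤ i + k then - F.coeff (i + k - j) else 0)

/-- Matrix of multiplication by `c0 + ∑ s_k W (k+1) F`. -/
def MatD {A : Type*} [CommRing A] (n : ℕ) (F : A[X]) (c0 : A) (s : ℕ → A) : Matrix (Fin n) (Fin n) A :=
  c0 • 1 + ∑ k ∈ Finset.range n, s k • MatW n F (k + 1)

/-- The polynomial `c0 + ∑ s_k W (k+1) F`. -/
def PolD {A : Type*} [CommRing A] (n : ℕ) (F : A[X]) (c0 : A) (s : ℕ → A) : A[X] :=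
  C c0 + ∑ k ∈ Finset.range n, C (s k) * W (k + 1) F

theorem MatW_map {A B : Type*} [CommRing A] [CommRing B] (φ : A →+* B) (n : ℕ) (F : A[X]) (k : ℕ) :
    (MatW n F k).map φ = MatW n (F.map φ) k := by
  ext i j
  simp only [MatW, map_apply, of_apply, coeff_map]
  split_ifs <;> simp

theorem MatD_map {A B : Type*} [CommRing A] [CommRing B] (φ : A →+* B) (n : ℕ) (F : A[X])
    (c0 : A) (s : ℕ → A) :
    (MatD n F c0 s).map φ = MatD n (F.map φ) (φ c0) (fun k => φ (s k)) := by
  ext i j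
  simp only [MatD, ← MatW_map]
  simp [Matrix.add_apply, Matrix.sum_apply, Matrix.one_apply]
  split_ifs <;> simp

theorem MatD_det_map {A B : Type*} [CommRing A] [CommRing B] (φ : A →+* B) (n : ℕ) (F : A[X])
    (c0 : A) (s : ℕ → A) :
    φ (MatD n F c0 s).det = (MatD n (F.map φ) (φ c0) (fun k => φ (s k))).det := by
  rw [← MatD_map, RingHom.map_det]; rfl

theorem PolD_map {A B : Type*} [CommRing A] [CommRing B] (φ : A →+* B) (n : ℕ) (F : A[X])
    (c0 : A) (s : ℕ → A) :
    (PolD n F c0 s).map φ = PolD n (F.map φ) (φ c0) (fun k => φ (s k)) := by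
  simp [PolD, Polynomial.map_sum, W_map]

theorem sum_fin_coeff {A : Type*} [CommRing A] (n : ℕ) (f : Fin n → A) (m : ℕ) :
    (∑ i : Fin n, C (f i) * X ^ (i : ℕ)).coeff m = if h : m < n then f ⟨m, h⟩ else 0 := by
  simp only [finsetSum_coeff, coeff_C_mul, coeff_X_pow]
  split_ifs with h
  · rw [Finset.sum_eq_single ⟨m, h⟩]
    · simp
    · intro b _ hb
      rw [if_neg, mul_zero]
      intro e; apply hb; ext; exact e.symm
    · simp
  · apply Finset.sum_eq_zero
    intro i _
    rw [if_neg, mul_zero]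
    have := i.2; omega

theorem mk_W_mul {A : Type*} [CommRing A] (n : ℕ) (F : A[X]) (hF : F.natDegree ≤ n) (k : ℕ)
    (j : Fin n) :
    AdjoinRoot.mk F (W k F * X ^ (j : ℕ)) =
      AdjoinRoot.mk F (∑ i : Fin n, C (MatW n F k i j) * X ^ (i : ℕ)) := by
  by_cases hj : (j : ℕ) < k
  · congr 1
    ext m
    rw [sum_fin_coeff, coeff_mul_X_pow', W_coeff]
    simp only [MatW, of_apply, if_pos hj]
    split_ifs with h1 h2 h2
    · congr 1; omega
    · apply coeff_eq_zero_of_natDegree_lt; omega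
    · rfl
    · rfl
  · have e : W k F * X ^ (j : ℕ) = F * X ^ ((j : ℕ) - k) +
        ∑ i : Fin n, C (MatW n F k i j) * X ^ (i : ℕ) := by
      ext m
      rw [coeff_add, sum_fin_coeff, coeff_mul_X_pow', W_coeff, coeff_mul_X_pow']
      simp only [MatW, of_apply, if_neg hj]
      have := j.2
      by_cases h1 : (j : ℕ) ≤ m
      · have h2 : (j : ℕ) - k ≤ m := by omega
        have h3 : ¬ (m < j) := by omega
        have h4 : m - j + k = m - (j - k) := by omega
        simp [h1, h3, h4, show ¬ (m + k < j) by omega]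
      · have h3 : m < n := by omega
        have h3' : m < j := by omega
        by_cases h2 : (j : ℕ) ≤ m + k
        · have h4 : m + k - j = m - (j - k) := by omega
          simp [h1, h2, h3, h3', h4]
        · simp [h1, h2, h3]
    rw [e, map_add, map_mul, AdjoinRoot.mk_self, zero_mul, zero_add]

theorem exists_basis_PolD {K : Type*} [Field K] (n : ℕ) (F : K[X]) (hF : F.natDegree = n)
    (hF0 : F ≠ 0) : ∃ b : Module.Basis (Fin n) K (AdjoinRoot F), ∀ (c0 : K) (s : ℕ → K),
    Algebra.leftMulMatrix b (AdjoinRoot.mk F (PolD n F c0 s)) = MatD n F c0 s := by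
  let b := (AdjoinRoot.powerBasis hF0).basis.reindex
    (finCongr ((AdjoinRoot.powerBasis_dim hF0).trans hF))
  have hb : ∀ i : Fin n, b i = AdjoinRoot.mk F (X ^ (i : ℕ)) := by
    intro i
    simp only [b]
    rw [Module.Basis.reindex_apply, PowerBasis.coe_basis]
    simp [AdjoinRoot.powerBasis_gen]
  have hC : ∀ (a : K) (P : K[X]), AdjoinRoot.mk F (C a * P) = a • AdjoinRoot.mk F P := by
    intro a P
    rw [← smul_eq_C_mul]; rfl
  have hW : ∀ k j, AdjoinRoot.mk F (W k F) * b j = ∑ i, MatW n F k i j • b i := by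
    intro k j
    rw [hb, ← map_mul, mk_W_mul n F hF.le, map_sum]
    simp only [hC, hb]
  refine ⟨b, fun c0 s => ?_⟩
  ext i j
  rw [Algebra.leftMulMatrix_eq_repr_mul]
  have e : AdjoinRoot.mk F (PolD n F c0 s) * b j =
      ∑ i : Fin n, MatD n F c0 s i j • b i := by
    have h0 : AdjoinRoot.mk F (C c0) = c0 • 1 := by
      rw [← mul_one (C c0), hC, map_one]
    rw [PolD, map_add, map_sum, add_mul, Finset.sum_mul, h0]
    simp only [hC, smul_mul_assoc, hW, one_mul, MatD, Matrix.add_apply, Matrix.sum_apply,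
      Matrix.smul_apply, add_smul, Finset.sum_add_distrib, Finset.sum_smul, Finset.smul_sum,
      smul_eq_mul, mul_smul]
    congr 1
    · rw [Finset.sum_eq_single j]
      · simp
      · intro i _ hi; simp [hi]
      · simp
    · rw [Finset.sum_comm]
  rw [e, b.repr_sum_self]

theorem norm_PolD {K : Type*} [Field K] (n : ℕ) (F : K[X]) (hF : F.natDegree = n) (hF0 : F ≠ 0)
    (c0 : K) (s : ℕ → K) :
    Algebra.norm K (AdjoinRoot.mk F (PolD n F c0 s)) = (MatD n F c0 s).det := by
  obtain ⟨b, hb⟩ := exists_basis_PolD n F hF hF0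
  rw [Algebra.norm_eq_matrix_det b, hb]

theorem aeval_charpoly_PolD {A K : Type*} [CommRing A] [Field K] [Algebra A K] (n : ℕ) (F : A[X])
    (hF : (F.map (algebraMap A K)).natDegree = n) (hF0 : F.map (algebraMap A K) ≠ 0)
    (c0 : A) (s : ℕ → A) :
    aeval (AdjoinRoot.mk (F.map (algebraMap A K)) ((PolD n F c0 s).map (algebraMap A K)))
      (MatD n F c0 s).charpoly = 0 := by
  obtain ⟨b, hb⟩ := exists_basis_PolD n _ hF hF0
  apply Algebra.leftMulMatrix_injective b
  rw [map_zero, PolD_map]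
  rw [← aeval_map_algebraMap K, ← aeval_algHom_apply, hb, ← MatD_map]
  rw [← Matrix.charpoly_map]
  exact Matrix.aeval_self_charpoly _

/-- Multiplication by `g` as a map `K[X]/(f) → K[X]/(f*g)`. -/
def mulMap {K : Type*} [Field K] (f g : K[X]) : AdjoinRoot f →ₗ[K] AdjoinRoot (f * g) where
  toFun := QuotientAddGroup.map (Ideal.span {f}).toAddSubgroup (Ideal.span {f * g}).toAddSubgroup
    (AddMonoidHom.mulLeft g) (by
      intro x hx
      rw [Submodule.mem_toAddSubgroup, Ideal.mem_span_singleton] at hx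
      obtain ⟨y, rfl⟩ := hx
      change _ ∈ Ideal.span _
      rw [Ideal.mem_span_singleton]
      exact ⟨y, by change g * _ = _; ring⟩)
  map_add' x y := map_add _ x y
  map_smul' a x := by
    obtain ⟨x, rfl⟩ := AdjoinRoot.mk_surjective x
    change AdjoinRoot.mk (f * g) (g * (a • x)) = AdjoinRoot.mk (f * g) (a • (g * x))
    congr 1
    rw [smul_eq_C_mul, smul_eq_C_mul]; ring

theorem mulMap_mk {K : Type*} [Field K] (f g x : K[X]) :
    mulMap f g (AdjoinRoot.mk f x) = AdjoinRoot.mk (f * g) (g * x) := rfl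

theorem norm_mk_mul {K : Type*} [Field K] (f g : K[X]) (hf : f ≠ 0) (hg : g ≠ 0) (P : K[X]) :
    Algebra.norm K (AdjoinRoot.mk (f * g) P) =
      Algebra.norm K (AdjoinRoot.mk f P) * Algebra.norm K (AdjoinRoot.mk g P) := by
  have hfg : f * g ≠ 0 := mul_ne_zero hf hg
  have : Module.Finite K (AdjoinRoot (f * g)) := (AdjoinRoot.powerBasis hfg).finite
  let φ := mulMap f g
  let ψ : AdjoinRoot (f * g) →ₗ[K] AdjoinRoot g :=
    (AdjoinRoot.algHomOfDvd K (f * g) g (Dvd.intro_left f rfl)).toLinearMap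
  have hψ : ∀ x, ψ (AdjoinRoot.mk (f * g) x) = AdjoinRoot.mk g x := by
    intro x
    simp only [ψ, AlgHom.toLinearMap_apply]
    rw [← AdjoinRoot.aeval_eq x, ← AdjoinRoot.aeval_eq x, ← aeval_algHom_apply,
      AdjoinRoot.algHomOfDvd_root]
  have hψs : Function.Surjective ψ := by
    intro y
    obtain ⟨y, rfl⟩ := AdjoinRoot.mk_surjective y
    exact ⟨_, hψ y⟩
  have hφi : Function.Injective φ := by
    rw [injective_iff_map_eq_zero]
    intro x hx
    obtain ⟨x, rfl⟩ := AdjoinRoot.mk_surjective x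
    rw [mulMap_mk, AdjoinRoot.mk_eq_zero, mul_comm f g, mul_dvd_mul_iff_left hg] at hx
    rwa [AdjoinRoot.mk_eq_zero]
  have hr : LinearMap.range φ = LinearMap.ker ψ := by
    ext y
    obtain ⟨y, rfl⟩ := AdjoinRoot.mk_surjective y
    rw [LinearMap.mem_ker, hψ, AdjoinRoot.mk_eq_zero]
    constructor
    · rintro ⟨x, hx⟩
      obtain ⟨x, rfl⟩ := AdjoinRoot.mk_surjective x
      rw [mulMap_mk, AdjoinRoot.mk_eq_mk] at hx
      have := (Dvd.intro_left f rfl : g ∣ f * g).trans hx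
      rwa [dvd_sub_right (Dvd.intro x rfl)] at this
    · rintro ⟨x, rfl⟩
      exact ⟨AdjoinRoot.mk f x, mulMap_mk _ _ _⟩
  let M := LinearMap.mul K (AdjoinRoot (f * g)) (AdjoinRoot.mk (f * g) P)
  have hM : LinearMap.ker ψ ≤ (LinearMap.ker ψ).comap M := by
    intro y hy
    obtain ⟨y, rfl⟩ := AdjoinRoot.mk_surjective y
    rw [LinearMap.mem_ker, hψ] at hy
    rw [Submodule.mem_comap, LinearMap.mem_ker]
    change ψ (AdjoinRoot.mk _ P * AdjoinRoot.mk _ y) = 0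
    rw [← map_mul, hψ, map_mul, hy, mul_zero]
  have h := LinearMap.det_eq_det_mul_det (LinearMap.ker ψ) M hM
  rw [Algebra.norm_apply, Algebra.norm_apply, Algebra.norm_apply]
  change LinearMap.det M = _
  rw [h]
  congr 1
  · let e : AdjoinRoot f ≃ₗ[K] LinearMap.ker ψ :=
      (LinearEquiv.ofInjective φ hφi).trans (LinearEquiv.ofEq _ _ hr)
    rw [← LinearMap.det_conj _ e]
    congr 1
    ext x
    obtain ⟨x, hx⟩ := e.surjective x
    subst hx
    obtain ⟨x, rfl⟩ := AdjoinRoot.mk_surjective x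
    simp only [LinearMap.comp_apply, LinearEquiv.coe_coe, LinearEquiv.symm_apply_apply]
    change AdjoinRoot.mk _ P * φ (AdjoinRoot.mk f x) = φ (AdjoinRoot.mk f P * AdjoinRoot.mk f x)
    rw [← map_mul, mulMap_mk, mulMap_mk, ← map_mul]
    congr 1; ring
  · let e := ψ.quotKerEquivOfSurjective hψs
    rw [← LinearMap.det_conj _ e]
    congr 1
    refine LinearMap.ext fun x => ?_
    obtain ⟨x, hx⟩ := e.surjective x
    subst hx
    obtain ⟨x, rfl⟩ := Submodule.Quotient.mk_surjective _ x
    obtain ⟨x, rfl⟩ := AdjoinRoot.mk_surjective x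
    simp only [LinearMap.comp_apply, LinearEquiv.coe_coe, LinearEquiv.symm_apply_apply]
    change ψ (AdjoinRoot.mk _ P * AdjoinRoot.mk _ x) = AdjoinRoot.mk _ P * ψ (AdjoinRoot.mk _ x)
    rw [← map_mul, hψ, hψ, map_mul]

theorem norm_mk_pow {K : Type*} [Field K] (f : K[X]) (hf : f ≠ 0) (e : ℕ) (P : K[X]) :
    Algebra.norm K (AdjoinRoot.mk (f ^ e) P) = (Algebra.norm K (AdjoinRoot.mk f P)) ^ e := by
  induction e with
  | zero =>
    have : Subsingleton (AdjoinRoot (f ^ 0)) := by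
      rw [pow_zero]
      exact Ideal.Quotient.subsingleton_iff.2 Ideal.span_singleton_one
    rw [Algebra.norm_apply, LinearMap.det_eq_one_of_subsingleton, pow_zero]
  | succ e ih =>
    rw [pow_succ, norm_mk_mul _ _ (pow_ne_zero _ hf) hf, ih, pow_succ]

theorem norm_mk_C {K : Type*} [Field K] (a : K) (ha : a ≠ 0) (P : K[X]) :
    Algebra.norm K (AdjoinRoot.mk (C a) P) = 1 := by
  have : Subsingleton (AdjoinRoot (C a)) := by
    refine Ideal.Quotient.subsingleton_iff.2 ?_
    rw [Ideal.span_singleton_eq_top]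
    exact isUnit_C.2 ha.isUnit
  rw [Algebra.norm_apply, LinearMap.det_eq_one_of_subsingleton]

/-- norms modulo monic polynomials commute with change of the base ring. -/
theorem norm_mk_map {A B : Type*} [CommRing A] [CommRing B] [Nontrivial A] [Nontrivial B]
    (φ : A →+* B) (g : A[X]) (hg : g.Monic) (P : A[X]) :
    Algebra.norm B (AdjoinRoot.mk (g.map φ) (P.map φ)) = φ (Algebra.norm A (AdjoinRoot.mk g P)) := by
  have hg' := hg.map φ
  let b := (AdjoinRoot.powerBasis' hg).basis.reindex (finCongr (AdjoinRoot.powerBasis'_dim hg))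
  let b' := (AdjoinRoot.powerBasis' hg').basis.reindex (finCongr ((AdjoinRoot.powerBasis'_dim hg').trans (hg.natDegree_map φ)))
  have hb : ∀ i : Fin g.natDegree, b i = AdjoinRoot.mk g (X ^ (i : ℕ)) := by
    intro i
    simp only [b]
    rw [Module.Basis.reindex_apply, PowerBasis.coe_basis]
    simp only [AdjoinRoot.powerBasis'_gen, map_pow, AdjoinRoot.mk_X]
    rfl
  have hb' : ∀ i : Fin g.natDegree, b' i = AdjoinRoot.mk (g.map φ) (X ^ (i : ℕ)) := by
    intro i
    simp only [b']
    rw [Module.Basis.reindex_apply, PowerBasis.coe_basis]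
    simp only [AdjoinRoot.powerBasis'_gen, map_pow, AdjoinRoot.mk_X]
    rfl
  have hC : ∀ (a : A) (Q : A[X]), AdjoinRoot.mk g (C a * Q) = a • AdjoinRoot.mk g Q := by
    intro a P
    rw [← smul_eq_C_mul]; rfl
  have hC' : ∀ (a : B) (Q : B[X]), AdjoinRoot.mk (g.map φ) (C a * Q) = a • AdjoinRoot.mk (g.map φ) Q := by
    intro a P
    rw [← smul_eq_C_mul]; rfl
  rw [Algebra.norm_eq_matrix_det b, Algebra.norm_eq_matrix_det b', RingHom.map_det]
  congr 1
  ext i j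
  rw [Algebra.leftMulMatrix_eq_repr_mul]
  let m : Fin g.natDegree → A := fun i => Algebra.leftMulMatrix b (AdjoinRoot.mk g P) i j
  have e : AdjoinRoot.mk g P * b j = ∑ i, m i • b i := by
    conv_lhs => rw [← b.sum_repr (AdjoinRoot.mk g P * b j)]
    simp only [m, Algebra.leftMulMatrix_eq_repr_mul]
  have e1 : AdjoinRoot.mk g (P * X ^ (j : ℕ)) = AdjoinRoot.mk g (∑ i, C (m i) * X ^ (i : ℕ)) := by
    simp only [map_sum, hC]
    rw [map_mul]
    simpa only [hb] using e
  rw [AdjoinRoot.mk_eq_mk] at e1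
  have e2 := Polynomial.map_dvd φ e1
  rw [Polynomial.map_sub, ← AdjoinRoot.mk_eq_mk, Polynomial.map_mul, Polynomial.map_sum] at e2
  simp only [Polynomial.map_mul, map_sum, Polynomial.map_C, Polynomial.map_pow, Polynomial.map_X,
    hC', ← hb', map_mul] at e2
  rw [e2]
  rw [b'.repr_sum_self]
  rfl

/-- `F(x,1)` over the base ring. -/
def Fp {A : Type*} [CommRing A] (n : ℕ) (c : ℕ → A) : A[X] :=
  ∑ i ∈ Finset.range (n + 1), C (c i) * X ^ (n - i)

theorem Fp_coeff {A : Type*} [CommRing A] (n : ℕ) (c : ℕ → A) (j : ℕ) :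
    (Fp n c).coeff j = if j ≤ n then c (n - j) else 0 := by
  simp only [Fp, finsetSum_coeff, coeff_C_mul, coeff_X_pow]
  split_ifs with h
  · rw [Finset.sum_eq_single (n - j)]
    · rw [if_pos (by omega), mul_one]
    · intro b hb hbj
      rw [Finset.mem_range] at hb
      rw [if_neg (by omega), mul_zero]
    · intro hh; exact absurd (Finset.mem_range.2 (by omega)) hh
  · apply Finset.sum_eq_zero
    intro i _
    rw [if_neg (by omega), mul_zero]

theorem Fp_natDegree_le {A : Type*} [CommRing A] (n : ℕ) (c : ℕ → A) : (Fp n c).natDegree ≤ n := by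
  rw [natDegree_le_iff_coeff_eq_zero]
  intro m hm
  rw [Fp_coeff, if_neg (by omega)]

theorem W_Fp {A : Type*} [CommRing A] (n k : ℕ) (hk : k ≤ n) (c : ℕ → A) :
    W k (Fp n c) = Fp (n - k) c := by
  ext j
  rw [W_coeff, Fp_coeff, Fp_coeff]
  by_cases h : j + k ≤ n
  · rw [if_pos h, if_pos (by omega)]; congr 1; omega
  · rw [if_neg h, if_neg (by omega)]

theorem Fp_map {A B : Type*} [CommRing A] [CommRing B] (φ : A →+* B) (n : ℕ) (c : ℕ → A) :
    (Fp n c).map φ = Fp n (fun i => φ (c i)) := by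
  simp [Fp, Polynomial.map_sum]

theorem binPoly_eq_s14 {A L : Type} [CommRing A] [Field L] [Algebra A L] (n : ℕ) (c : ℕ → A) :
    binPoly A L n c = (Fp n c).map (algebraMap A L) := by
  rw [Fp_map]; rfl

section RF
variable {A L : Type} [CommRing A] [Field L] [Algebra A L]

/-- Polynomials over the base ring evaluated at `θ`. -/
def io (A L : Type) [CommRing A] [Field L] [Algebra A L] (n : ℕ) (c : ℕ → A) :
    A[X] →ₐ[A] KF A L n c := aeval (θF A L n c)

theorem io_eq (n : ℕ) (c : ℕ → A) (P : A[X]) :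
    io A L n c P = AdjoinRoot.mk (binPoly A L n c) (P.map (algebraMap A L)) := by
  rw [io, ← AdjoinRoot.aeval_eq, aeval_map_algebraMap]; rfl

theorem io_Fp_self (n : ℕ) (c : ℕ → A) : io A L n c (Fp n c) = 0 := by
  rw [io_eq, ← binPoly_eq_s14, AdjoinRoot.mk_self]

theorem io_Fp (n : ℕ) (c : ℕ → A) (m : ℕ) :
    io A L n c (Fp m c) = ζF A L n c m + algebraMap A _ (c m) := by
  rw [Fp, Finset.sum_range_succ, map_add, map_sum, ζF, Nat.sub_self, pow_zero, mul_one]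
  congr 1
  · refine Finset.sum_congr rfl fun i _ => ?_
    simp [io]
  · simp [io]

theorem algebraMap_mem_RF (n : ℕ) (c : ℕ → A) (a : A) :
    algebraMap A (KF A L n c) a ∈ RFmod A L n c := by
  rw [Algebra.algebraMap_eq_smul_one]
  exact Submodule.smul_mem _ _ (Submodule.subset_span (Or.inl rfl))

theorem io_W_mem (n : ℕ) (c : ℕ → A) (k : ℕ) (hk : 1 ≤ k) :
    io A L n c (W k (Fp n c)) ∈ RFmod A L n c := by
  rcases lt_or_ge n k with h | h
  · rw [W_eq_zero, map_zero]
    · exact Submodule.zero_mem _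
    · refine degree_le_natDegree.trans_lt ?_
      exact_mod_cast (Fp_natDegree_le n c).trans_lt h
  · rw [W_Fp n k h, io_Fp]
    refine Submodule.add_mem _ ?_ (algebraMap_mem_RF _ _ _)
    rcases Nat.eq_zero_or_pos (n - k) with h0 | h0
    · rw [h0]; simp [ζF]
    · exact Submodule.subset_span (Or.inr ⟨n - k, h0, by omega, rfl⟩)

theorem RF_eq (n : ℕ) (c : ℕ → A) : RFmod A L n c =
    Submodule.span A ({1} ∪ {x | ∃ k, 1 ≤ k ∧ k ≤ n ∧ x = io A L n c (W k (Fp n c))}) := by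
  apply le_antisymm
  · rw [RFmod, Submodule.span_le]
    rintro x (rfl | ⟨i, h1, h2, rfl⟩)
    · exact Submodule.subset_span (Or.inl rfl)
    · have h := io_Fp (L := L) n c i
      rw [← sub_eq_iff_eq_add] at h
      rw [← h, SetLike.mem_coe]
      refine Submodule.sub_mem _ ?_ ?_
      · refine Submodule.subset_span (Or.inr ⟨n - i, by omega, by omega, ?_⟩)
        rw [W_Fp _ _ (by omega), Nat.sub_sub_self (by omega)]
      · rw [Algebra.algebraMap_eq_smul_one]
        exact Submodule.smul_mem _ _ (Submodule.subset_span (Or.inl rfl))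
  · rw [Submodule.span_le]
    rintro x (rfl | ⟨i, h1, h2, rfl⟩)
    · exact Submodule.subset_span (Or.inl rfl)
    · exact io_W_mem n c i h1

theorem io_W_mul_mem (n : ℕ) (c : ℕ → A) (N : ℕ) (q : A[X]) :
    io A L n c (W N (Fp n c * q)) ∈ RFmod A L n c := by
  rw [W_mul, map_add, map_mul, io_Fp_self, zero_mul, add_zero, map_sum]
  refine Submodule.sum_mem _ fun i hi => ?_
  rw [← smul_eq_C_mul, map_smul]
  exact Submodule.smul_mem _ _ (io_W_mem n c _ (by have := Finset.mem_range.1 hi; omega))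

theorem RF_mul_le (n : ℕ) (c : ℕ → A) : RFmod A L n c * RFmod A L n c ≤ RFmod A L n c := by
  conv_lhs => rw [RF_eq, Submodule.span_mul_span]
  rw [Submodule.span_le]
  rintro _ ⟨x, hx, y, hy, rfl⟩
  have hx' : x ∈ RFmod A L n c := by rw [RF_eq]; exact Submodule.subset_span hx
  have hy' : y ∈ RFmod A L n c := by rw [RF_eq]; exact Submodule.subset_span hy
  rcases hx with rfl | ⟨k, hk, -, rfl⟩
  · simpa using hy'
  rcases hy with rfl | ⟨l, hl, -, rfl⟩
  · simpa using hx'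
  simp only [SetLike.mem_coe]
  rw [← map_mul, W_mul_W]
  exact io_W_mul_mem _ _ _ _

/-- Nakagawa: `R_F` is a ring. -/
def RFalg (A L : Type) [CommRing A] [Field L] [Algebra A L] (n : ℕ) (c : ℕ → A) :
    Subalgebra A (KF A L n c) :=
  (RFmod A L n c).toSubalgebra (Submodule.subset_span (Or.inl rfl))
    (fun _ _ hx hy => RF_mul_le n c (Submodule.mul_mem_mul hx hy))

theorem mem_RFalg (n : ℕ) (c : ℕ → A) (x : KF A L n c) :
    x ∈ RFalg A L n c ↔ x ∈ RFmod A L n c := Iff.rfl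

theorem aeval_mem_RFalg (n : ℕ) (c : ℕ → A) (x : KF A L n c) (hx : x ∈ RFmod A L n c) (P : A[X]) :
    aeval x P ∈ RFalg A L n c := by
  have h := Polynomial.coe_aeval_mk_apply (S := RFalg A L n c) (p := P) x hx
  rw [← h]
  exact SetLike.coe_mem _

theorem io_PolD_mem (n : ℕ) (c : ℕ → A) (c0 : A) (s : ℕ → A) :
    io A L n c (PolD n (Fp n c) c0 s) ∈ RFmod A L n c := by
  rw [PolD, map_add, map_sum]
  refine Submodule.add_mem _ ?_ (Submodule.sum_mem _ fun k _ => ?_)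
  · have : io A L n c (C c0) = algebraMap A _ c0 := by simp [io]
    rw [this]
    exact algebraMap_mem_RF _ _ _
  · rw [← smul_eq_C_mul, map_smul]
    exact Submodule.smul_mem _ _ (io_W_mem n c _ (by omega))

theorem exists_PolD (n : ℕ) (c : ℕ → A) (ρ : KF A L n c) (h : ρ ∈ RFmod A L n c) :
    ∃ c0 s, ρ = io A L n c (PolD n (Fp n c) c0 s) := by
  rw [RF_eq] at h
  induction h using Submodule.span_induction with
  | mem x hx =>
    rcases hx with rfl | ⟨k, hk, hk', rfl⟩
    · exact ⟨1, fun _ => 0, by simp [PolD]⟩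
    · refine ⟨0, fun i => if i = k - 1 then 1 else 0, ?_⟩
      congr 1
      rw [PolD, Finset.sum_eq_single (k - 1)]
      · simp [Nat.sub_add_cancel hk]
      · intro b _ hb; simp [hb]
      · intro hh; exact absurd (Finset.mem_range.2 (by omega)) hh
  | zero => exact ⟨0, fun _ => 0, by simp [PolD]⟩
  | add x y _ _ hx hy =>
    obtain ⟨c0, s, rfl⟩ := hx
    obtain ⟨c1, t, rfl⟩ := hy
    refine ⟨c0 + c1, fun k => s k + t k, ?_⟩
    rw [← map_add]
    congr 1
    simp only [PolD, C_add, add_mul, Finset.sum_add_distrib]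
    ring
  | smul a x _ hx =>
    obtain ⟨c0, s, rfl⟩ := hx
    refine ⟨a * c0, fun k => a * s k, ?_⟩
    rw [← map_smul]
    congr 1
    simp only [PolD, smul_eq_C_mul, C_mul, mul_add, Finset.mul_sum, mul_assoc]

variable [FaithfulSMul A L]

theorem Fp_map_natDegree (n : ℕ) (c : ℕ → A) (hc : c 0 ≠ 0) :
    ((Fp n c).map (algebraMap A L)).natDegree = n ∧ (Fp n c).map (algebraMap A L) ≠ 0 := by
  have h : ((Fp n c).map (algebraMap A L)).coeff n ≠ 0 := by
    rw [coeff_map, Fp_coeff, if_pos le_rfl, Nat.sub_self]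
    exact (map_ne_zero_iff _ (FaithfulSMul.algebraMap_injective A L)).2 hc
  refine ⟨le_antisymm (natDegree_map_le.trans (Fp_natDegree_le n c)) (le_natDegree_of_ne_zero h), ?_⟩
  intro h0
  rw [h0] at h
  simp at h

theorem norm_io_PolD (n : ℕ) (c : ℕ → A) (hc : c 0 ≠ 0) (c0 : A) (s : ℕ → A) :
    Algebra.norm L (io A L n c (PolD n (Fp n c) c0 s)) =
      algebraMap A L (MatD n (Fp n c) c0 s).det := by
  obtain ⟨h1, h2⟩ := Fp_map_natDegree (L := L) n c hc
  rw [← binPoly_eq_s14] at h1 h2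
  rw [io_eq, PolD_map, MatD_det_map, ← binPoly_eq_s14, norm_PolD n _ h1 h2]

theorem isUnitRF_of_det (n : ℕ) (c : ℕ → A) (hc : c 0 ≠ 0) (c0 : A) (s : ℕ → A)
    (h : IsUnit (MatD n (Fp n c) c0 s).det) :
    IsUnitRF A L n c (io A L n c (PolD n (Fp n c) c0 s)) := by
  obtain ⟨h1, h2⟩ := Fp_map_natDegree (L := L) n c hc
  have hm := io_PolD_mem (L := L) n c c0 s
  have hch := aeval_charpoly_PolD n (Fp n c) h1 h2 c0 s
  rw [← binPoly_eq_s14, ← io_eq] at hch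
  set ρ := io A L n c (PolD n (Fp n c) c0 s)
  set χ := (MatD n (Fp n c) c0 s).charpoly
  have hχ : IsUnit (χ.coeff 0) := by
    rw [Matrix.det_eq_sign_charpoly_coeff] at h
    exact isUnit_of_mul_isUnit_right h
  obtain ⟨v, hv⟩ := hχ
  refine ⟨hm, -((↑v⁻¹ : A) • aeval ρ (divX χ)), ?_, ?_⟩
  · refine Submodule.neg_mem _ (Submodule.smul_mem _ _ ?_)
    rw [← mem_RFalg]
    exact aeval_mem_RFalg n c ρ hm _
  · rw [← divX_mul_X_add χ, map_add, map_mul, aeval_X, aeval_C, ← hv] at hch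
    rw [mul_neg, mul_smul_comm, mul_comm, eq_neg_of_add_eq_zero_left hch, smul_neg, neg_neg,
      Algebra.algebraMap_eq_smul_one, smul_smul, Units.inv_mul, one_smul]

end RF

section Padic
variable {p : ℕ} [Fact p.Prime]

theorem isUnit_iff_toZMod (x : ℤ_[p]) : IsUnit x ↔ PadicInt.toZMod x ≠ 0 := by
  rw [← not_iff_not, not_not, ← RingHom.mem_ker, PadicInt.ker_toZMod, IsLocalRing.mem_maximalIdeal,
    mem_nonunits_iff]

theorem toZMod_eq_zero_iff (x : ℤ_[p]) : PadicInt.toZMod x = 0 ↔ ‖x‖ < 1 := by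
  rw [← not_iff_not, ← ne_eq, ← isUnit_iff_toZMod, PadicInt.isUnit_iff]
  have := PadicInt.norm_le_one x
  constructor
  · intro h; rw [h]; exact lt_irrefl _
  · intro h; exact le_antisymm this (not_lt.1 h)

theorem sq_of_hensel (v a : ℤ_[p]) (h : ‖a ^ 2 - v‖ < ‖2 * a‖ ^ 2) : ∃ w : ℤ_[p], v = w ^ 2 := by
  obtain ⟨z, hz, -⟩ := hensels_lemma (R := ℤ_[p]) (F := (X ^ 2 - C v : ℤ_[p][X])) (a := a) (by
    simpa [derivative_X_pow, one_add_one_eq_two] using h)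
  refine ⟨z, ?_⟩
  simp only [map_sub, map_pow, aeval_X, aeval_C, Algebra.algebraMap_self, RingHom.id_apply] at hz
  exact (sub_eq_zero.1 hz).symm

theorem norm_two_of_odd (hp : 2 < p) : ‖(2 : ℤ_[p])‖ = 1 := by
  rw [← PadicInt.isUnit_iff, isUnit_iff_toZMod, map_ofNat]
  have : Fact (2 < p) := ⟨hp⟩
  exact Ring.two_ne_zero (by rw [ZMod.ringChar_zmod_n]; omega)

theorem unit_sq_of_odd (hp : 2 < p) (d : ℤ_[p]) (u : ℤ_[p]ˣ) (y : ZMod p) (hy : y ≠ 0)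
    (h : PadicInt.toZMod d = PadicInt.toZMod (u : ℤ_[p]) * y ^ 2) :
    ∃ w : ℤ_[p]ˣ, d = u * (w : ℤ_[p]) ^ 2 := by
  obtain ⟨a, rfl⟩ := ZMod.ringHom_surjective (PadicInt.toZMod (p := p)) y
  have ha : IsUnit a := (isUnit_iff_toZMod a).2 hy
  obtain ⟨w, hw⟩ := sq_of_hensel (d * (↑u⁻¹ : ℤ_[p])) a (by
    rw [norm_mul, norm_two_of_odd hp, PadicInt.isUnit_iff.1 ha, mul_one, one_pow,
      ← toZMod_eq_zero_iff, map_sub, map_mul, h, mul_right_comm, ← map_mul, Units.mul_inv, map_one,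
      one_mul, map_pow, sub_self])
  have hd : d = u * w ^ 2 := by
    rw [← hw, mul_left_comm, Units.mul_inv, mul_one]
  have hwu : IsUnit w := by
    rw [isUnit_iff_toZMod]
    intro h0
    rw [hd, map_mul, map_pow, h0] at h
    have hu := (isUnit_iff_toZMod (u : ℤ_[p])).1 u.isUnit
    have := mul_ne_zero hu (pow_ne_zero 2 hy)
    rw [← h] at this
    simp at this
  exact ⟨hwu.unit, hd⟩

theorem unit_sq_of_two (d : ℤ_[2]) (u : ℤ_[2]ˣ) (e : ℤ_[2]) (h : d = u + 8 * e) :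
    ∃ w : ℤ_[2]ˣ, d = u * (w : ℤ_[2]) ^ 2 := by
  have n2 : ‖(2 : ℤ_[2])‖ = 1 / 2 := by
    have := PadicInt.norm_p (p := 2); norm_num at this ⊢; exact this
  have h8 : ‖(8 : ℤ_[2])‖ = 1 / 8 := by
    rw [show (8 : ℤ_[2]) = 2 ^ 3 by norm_num, norm_pow, n2]; norm_num
  obtain ⟨w, hw⟩ := sq_of_hensel (d * (↑u⁻¹ : ℤ_[2])) 1 (by
    rw [h, add_mul, Units.mul_inv, one_pow, mul_one, n2, sub_add_cancel_left, norm_neg, mul_assoc,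
      norm_mul, h8]
    have := PadicInt.norm_le_one (e * (↑u⁻¹ : ℤ_[2]))
    have := norm_nonneg (e * (↑u⁻¹ : ℤ_[2]))
    linarith)
  have hd : d = u * w ^ 2 := by
    rw [← hw, mul_left_comm, Units.mul_inv, mul_one]
  have hwu : IsUnit w := by
    rw [isUnit_iff_toZMod]
    intro h0
    have hu := (isUnit_iff_toZMod (u : ℤ_[2])).1 u.isUnit
    apply hu
    have e8 : PadicInt.toZMod (8 : ℤ_[2]) = 0 := by rw [map_ofNat]; decide
    have := congrArg PadicInt.toZMod (h.symm.trans hd)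
    simpa [h0, e8] using this
  exact ⟨hwu.unit, hd⟩

theorem redForm_eq (n : ℕ) (c : ℕ → ℤ_[p]) :
    redForm p n c = ((Fp n c).map PadicInt.toZMod).homogenize n := by
  rw [Fp_map, Fp, homogenize_finsetSum, redForm]
  refine Finset.sum_congr rfl fun i hi => ?_
  have := Finset.mem_range.1 hi
  rw [homogenize_C_mul, homogenize_X_pow (by omega), mul_assoc, Nat.sub_sub_self (by omega)]

theorem red_ne_zero (n : ℕ) (c : ℕ → ℤ_[p]) (h : PrimP p n c) :
    (Fp n c).map PadicInt.toZMod ≠ 0 := by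
  obtain ⟨i, hi, hu⟩ := h
  intro h0
  have := congrArg (fun f => f.coeff (n - i)) h0
  simp only [coeff_map, Fp_coeff, if_pos (Nat.sub_le n i), Nat.sub_sub_self hi, coeff_zero] at this
  exact (isUnit_iff_toZMod _).1 hu this

theorem red_natDegree_le (n : ℕ) (c : ℕ → ℤ_[p]) :
    ((Fp n c).map (PadicInt.toZMod (p := p))).natDegree ≤ n :=
  natDegree_map_le.trans (Fp_natDegree_le n c)

theorem evenRam_of (m : ℕ) (c : ℕ → ℤ_[p]) (κ : (ZMod p)ˣ)
    (h : (ZMod p)[X]) (he : (Fp (m + m) c).map PadicInt.toZMod = C (κ : ZMod p) * h ^ 2) :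
    EvenRamP p (m + m) c := by
  have hd := red_natDegree_le (m + m) c
  rw [he, natDegree_C_mul (Units.ne_zero κ), natDegree_pow] at hd
  refine ⟨κ, h.homogenize m, ?_⟩
  rw [redForm_eq, he, homogenize_C_mul, pow_two, pow_two, homogenize_mul] <;> omega

theorem of_evenRam (n : ℕ) (c : ℕ → ℤ_[p]) (h0 : PrimP p n c) (h : EvenRamP p n c) :
    ∃ m, n = m + m ∧ ∃ κ : (ZMod p)ˣ, ∃ h : (ZMod p)[X],
      (Fp n c).map PadicInt.toZMod = C (κ : ZMod p) * h ^ 2 ∧ h.natDegree ≤ m ∧ h ≠ 0 := by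
  obtain ⟨κ, H, hH⟩ := h
  have hf := red_ne_zero n c h0
  have hd := red_natDegree_le n c
  have hr : redForm p n c ≠ 0 := by
    rw [redForm_eq, Ne, homogenize_eq_zero_iff hd]; exact hf
  have hH0 : H ≠ 0 := by
    rintro rfl
    apply hr
    rw [hH]; simp
  have ht : (redForm p n c).totalDegree = n := by
    have hhom : (redForm p n c).IsHomogeneous n := by rw [redForm_eq]; exact isHomogeneous_homogenize _
    exact hhom.totalDegree hr
  have e1 : n = H.totalDegree + H.totalDegree := by
    rw [hH, pow_two, MvPolynomial.totalDegree_mul_of_isDomain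
      (by simp) (mul_ne_zero hH0 hH0),
      MvPolynomial.totalDegree_mul_of_isDomain hH0 hH0, MvPolynomial.totalDegree_C, zero_add] at ht
    exact ht.symm
  have e2 : (Fp n c).map PadicInt.toZMod = C (κ : ZMod p) * (MvPolynomial.aeval ![X, 1] H) ^ 2 := by
    rw [← aeval_homogenize_X_one _ hd, ← redForm_eq, hH, map_mul, map_pow, MvPolynomial.aeval_C]
    rfl
  refine ⟨_, e1, κ, MvPolynomial.aeval ![X, 1] H, e2, ?_, ?_⟩
  · rw [e2, natDegree_C_mul (Units.ne_zero κ), natDegree_pow] at hd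
    omega
  · intro hz
    rw [e2, hz] at hf
    simp at hf

/-- what has to be shown for a single unit `u` -/
def Hit (p : ℕ) [Fact p.Prime] (n : ℕ) (c : ℕ → ℤ_[p]) (u : ℤ_[p]ˣ) : Prop :=
  ∃ ρ : KF ℤ_[p] ℚ_[p] n c, IsUnitRF ℤ_[p] ℚ_[p] n c ρ ∧
          ∃ w : ℤ_[p]ˣ, Algebra.norm ℚ_[p] ρ =
            (((u : ℤ_[p]) : ℚ_[p])) * (((w : ℤ_[p]) : ℚ_[p])) ^ 2

theorem hit_of_det (n : ℕ) (c : ℕ → ℤ_[p]) (hc : c 0 ≠ 0) (u : ℤ_[p]ˣ) (c0 : ℤ_[p]) (s : ℕ → ℤ_[p])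
    (h : ∃ w : ℤ_[p]ˣ, (MatD n (Fp n c) c0 s).det = u * (w : ℤ_[p]) ^ 2) : Hit p n c u := by
  obtain ⟨w, hw⟩ := h
  refine ⟨_, isUnitRF_of_det n c hc c0 s ?_, w, ?_⟩
  · rw [hw]; exact u.isUnit.mul (w.isUnit.pow 2)
  · rw [norm_io_PolD n c hc, hw]
    simp [PadicInt.algebraMap_apply]

theorem hit_odd (n : ℕ) (hn : Odd n) (c : ℕ → ℤ_[p]) (hc : c 0 ≠ 0) (u : ℤ_[p]ˣ) : Hit p n c u := by
  obtain ⟨m, rfl⟩ := hn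
  refine hit_of_det _ c hc u u (fun _ => 0) ⟨u ^ m, ?_⟩
  simp only [MatD, zero_smul, Finset.sum_const_zero, add_zero, det_smul, det_one, Fintype.card_fin]
  push_cast; ring

theorem trace_MatW {A : Type*} [CommRing A] (n : ℕ) (F : A[X]) (k : ℕ) (hk : k ≤ n) :
    (MatW n F k).trace = k * F.coeff k := by
  have : ∀ i : Fin n, MatW n F k i i = (fun j : ℕ => if j < k then F.coeff k else 0) i := by
    intro i; simp [MatW]
  rw [Matrix.trace]
  simp only [Matrix.diag, this]
  rw [Fin.sum_univ_eq_sum_range (fun j : ℕ => if j < k then F.coeff k else 0), ← Finset.sum_filter]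
  have e : (Finset.range n).filter (· < k) = Finset.range k := by
    ext; simp; omega
  rw [e, Finset.sum_const, Finset.card_range, nsmul_eq_mul]

theorem two_dvd_iff (x : ℤ_[2]) : PadicInt.toZMod x = 0 ↔ (2 : ℤ_[2]) ∣ x := by
  rw [← RingHom.mem_ker, PadicInt.ker_toZMod, PadicInt.maximalIdeal_eq_span_p,
    Ideal.mem_span_singleton]
  rfl

theorem hit_two (n : ℕ) (c : ℕ → ℤ_[2]) (hc : c 0 ≠ 0) (hprim : PrimP 2 n c)
    (hE : ¬ EvenRamP 2 n c) (u : ℤ_[2]ˣ) : Hit 2 n c u := by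
  rcases Nat.even_or_odd n with ⟨m, rfl⟩ | ho
  swap
  · exact hit_odd n ho c hc u
  set F := Fp (m + m) c with hF
  -- an odd index with unit coefficient
  obtain ⟨k, hk, hkn, hku⟩ : ∃ k, Odd k ∧ k ≤ m + m ∧ IsUnit (F.coeff k) := by
    by_contra hcon
    push Not at hcon
    apply hE
    apply evenRam_of m c 1 (contract 2 (F.map PadicInt.toZMod))
    rw [← ZMod.expand_card, expand_contract]
    · simp [hF]
    · ext j
      rw [coeff_derivative, coeff_zero]
      rcases Nat.even_or_odd j with hj | hj
      · have : PadicInt.toZMod (F.coeff (j + 1)) = 0 := by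
          by_cases hjn : j + 1 ≤ m + m
          · have := hcon (j + 1) hj.add_one hjn
            rwa [isUnit_iff_toZMod, not_not] at this
          · rw [hF, Fp_coeff, if_neg hjn, map_zero]
        rw [coeff_map, this, zero_mul]
      · have : ((j : ZMod 2) + 1) = 0 := by
          have := (ZMod.natCast_eq_zero_iff_even (n := j + 1)).2 hj.add_one
          exact_mod_cast this
        rw [this, mul_zero]
    · norm_num
  have hT : IsUnit (MatW (m + m) F k).trace := by
    rw [trace_MatW _ _ _ hkn]
    refine IsUnit.mul ?_ hku
    rw [isUnit_iff_toZMod, map_natCast, Ne, ZMod.natCast_eq_zero_iff_even, Nat.not_even_iff_odd]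
    exact hk
  obtain ⟨T, hT⟩ := hT
  set M := MatW (m + m) F k
  obtain ⟨E, hE⟩ : ∃ E : ℤ_[2], ∀ t, ∃ e, (1 + (2 * t) • M).det = 1 + 2 * t * T + 4 * t ^ 2 * E + 8 * e := by
    refine ⟨((det (1 + (X : ℤ_[2][X]) • M.map C)).divX.divX).coeff 0, fun t => ?_⟩
    refine ⟨t ^ 3 * (divX (det (1 + (X : ℤ_[2][X]) • M.map C)).divX.divX).eval (2 * t), ?_⟩
    rw [det_one_add_smul, ← hT]
    generalize (det (1 + (X : ℤ_[2][X]) • M.map C)).divX.divX = Q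
    conv_lhs => rw [← divX_mul_X_add Q]
    simp
    ring
  have hdet : ∀ t, MatD (m + m) F 1 (fun i => if i = k - 1 then t else 0) = 1 + t • M := by
    intro t
    have hk1 : 1 ≤ k := hk.pos
    rw [MatD, one_smul, Finset.sum_eq_single (k - 1)]
    · simp [Nat.sub_add_cancel hk1, M]
    · intro b _ hb; simp [hb]
    · intro hh; exact absurd (Finset.mem_range.2 (by omega)) hh
  suffices ∃ t e : ℤ_[2], (1 + (2 * t) • M).det = (u : ℤ_[2]) + 8 * e by
    obtain ⟨t, e, h⟩ := this
    refine hit_of_det _ c hc u 1 (fun i => if i = k - 1 then 2 * t else 0) ?_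
    rw [hdet]
    exact unit_sq_of_two _ u e h
  have dich : ∀ x : ℤ_[2], (∃ y, x = 2 * y) ∨ ∃ y, x = 1 + 2 * y := by
    intro x
    have : ∀ z : ZMod 2, z = 0 ∨ z - 1 = 0 := by decide
    rcases this (PadicInt.toZMod x) with h | h
    · exact Or.inl ((two_dvd_iff x).1 h)
    · right
      rw [← map_one (PadicInt.toZMod (p := 2)), ← map_sub, two_dvd_iff] at h
      obtain ⟨y, hy⟩ := h
      exact ⟨y, by rw [← hy]; ring⟩
  have hTT : (↑T⁻¹ : ℤ_[2]) * T = 1 := T.inv_mul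
  obtain ⟨μ, hμ⟩ : ∃ y, (u : ℤ_[2]) = 1 + 2 * y := by
    rcases dich u with ⟨y, hy⟩ | h
    · have h1 := (isUnit_iff_toZMod (u : ℤ_[2])).1 u.isUnit
      exact absurd ((two_dvd_iff _).2 ⟨y, hy⟩) h1
    · exact h
  rcases dich μ with ⟨y, hy⟩ | ⟨y, hy⟩
  · obtain ⟨e, he⟩ := hE (↑T⁻¹ * μ)
    refine ⟨_, 2 * (↑T⁻¹ * y) ^ 2 * E + e, he.trans ?_⟩
    rw [hμ, hy]
    linear_combination (4 * y) * hTT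
  · obtain ⟨e, he⟩ := hE (↑T⁻¹ * (μ - 2 * E))
    set t := (↑T⁻¹ : ℤ_[2]) * (μ - 2 * E) with ht
    have htT : t * T = μ - 2 * E := by
      rw [ht]; linear_combination (μ - 2 * E) * hTT
    obtain ⟨z, hz⟩ : ∃ z, t = 1 + 2 * z := by
      rcases dich t with ⟨z, hz⟩ | h
      · exfalso
        have : (2 : ℤ_[2]) ∣ 1 := ⟨z * T + E - y, by
          rw [hz] at htT
          rw [hy] at htT
          linear_combination -htT⟩
        rw [← two_dvd_iff, map_one] at this
        exact one_ne_zero this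
      · exact h
    refine ⟨t, 2 * (z + z ^ 2) * E + e, he.trans ?_⟩
    rw [hμ]
    have : t ^ 2 = 1 + 4 * (z + z ^ 2) := by rw [hz]; ring
    rw [this]
    linear_combination 2 * htT

end Padic

section Padic
variable {p : ℕ} [Fact p.Prime]

theorem exists_lift_s14 (h : (ZMod p)[X]) (m : ℕ) (hm : h.natDegree ≤ m) :
    ∃ H : ℤ_[p][X], H.map PadicInt.toZMod = h ∧ H.natDegree = m ∧ H ≠ 0 := by
  obtain ⟨L, hL, hd⟩ := exists_natDegree_eq_of_mem_lifts
    (mem_lifts_of_surjective (ZMod.ringHom_surjective (PadicInt.toZMod (p := p))) h)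
  have key : ∀ H : ℤ_[p][X], H.natDegree ≤ m → H.coeff m ≠ 0 → H.natDegree = m ∧ H ≠ 0 := by
    intro H h1 h2
    refine ⟨le_antisymm h1 (le_natDegree_of_ne_zero h2), ?_⟩
    rintro rfl
    simp at h2
  by_cases h0 : L.coeff m = 0
  · refine ⟨L + C (p : ℤ_[p]) * X ^ m, ?_, key _ ?_ ?_⟩
    · rw [Polynomial.map_add, hL]
      simp
    · refine (natDegree_add_le _ _).trans (max_le (hd ▸ hm) (natDegree_C_mul_X_pow_le _ _))
    · simp only [coeff_add, h0, coeff_C_mul, coeff_X_pow, if_true, zero_add, mul_one]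
      exact_mod_cast (Fact.out : p.Prime).ne_zero
  · exact ⟨L, hL, key _ (hd ▸ hm) h0⟩

theorem det_red_eq (n : ℕ) (F G : ℤ_[p][X]) (h : F.map PadicInt.toZMod = G.map PadicInt.toZMod)
    (c0 : ℤ_[p]) (s : ℕ → ℤ_[p]) :
    PadicInt.toZMod (MatD n F c0 s).det = PadicInt.toZMod (MatD n G c0 s).det := by
  rw [MatD_det_map, MatD_det_map, h]

theorem natDegree_map_Q (F : ℤ_[p][X]) :
    (F.map (algebraMap ℤ_[p] ℚ_[p])).natDegree = F.natDegree :=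
  natDegree_map_eq_of_injective (FaithfulSMul.algebraMap_injective _ _) _

theorem map_Q_ne_zero (F : ℤ_[p][X]) (h : F ≠ 0) : F.map (algebraMap ℤ_[p] ℚ_[p]) ≠ 0 := by
  rwa [Ne, Polynomial.map_eq_zero_iff (FaithfulSMul.algebraMap_injective _ _)]

theorem det_eq_norm (n : ℕ) (F : ℤ_[p][X]) (hn : F.natDegree = n) (h0 : F ≠ 0)
    (c0 : ℤ_[p]) (s : ℕ → ℤ_[p]) :
    algebraMap ℤ_[p] ℚ_[p] (MatD n F c0 s).det =
      Algebra.norm ℚ_[p] (AdjoinRoot.mk (F.map (algebraMap ℤ_[p] ℚ_[p]))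
        ((PolD n F c0 s).map (algebraMap ℤ_[p] ℚ_[p]))) := by
  rw [MatD_det_map, PolD_map, norm_PolD]
  · rw [natDegree_map_Q, hn]
  · exact map_Q_ne_zero F h0

theorem not_hit_of_evenRam (hp : 2 < p) (n : ℕ) (c : ℕ → ℤ_[p]) (hc : c 0 ≠ 0) (h0 : PrimP p n c)
    (h : EvenRamP p n c) : ∃ u, ¬ Hit p n c u := by
  obtain ⟨m, hm, κ, h, he, hd, hh0⟩ := of_evenRam n c h0 h
  obtain ⟨H, hH, hHd, hH0⟩ := exists_lift_s14 h m hd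
  obtain ⟨k, hk⟩ := ZMod.ringHom_surjective (PadicInt.toZMod (p := p)) (κ : ZMod p)
  have hk0 : k ≠ 0 := by
    rintro rfl
    rw [map_zero] at hk
    exact κ.ne_zero hk.symm
  set G : ℤ_[p][X] := C k * (H * H) with hG
  have hG0 : G ≠ 0 := mul_ne_zero (C_ne_zero.2 hk0) (mul_ne_zero hH0 hH0)
  have hGd : G.natDegree = n := by
    rw [hG, natDegree_C_mul hk0, natDegree_mul hH0 hH0, hHd, hm]
  have hGm : (Fp n c).map PadicInt.toZMod = G.map PadicInt.toZMod := by
    rw [he, hG, Polynomial.map_mul, Polynomial.map_mul, map_C, hk, hH, pow_two]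
  -- a nonresidue
  obtain ⟨a, ha⟩ := FiniteField.exists_nonsquare (F := ZMod p) (by
    rw [ZMod.ringChar_zmod_n]; omega)
  have ha0 : a ≠ 0 := by rintro rfl; exact ha IsSquare.zero
  obtain ⟨u, rfl⟩ := ZMod.ringHom_surjective (PadicInt.toZMod (p := p)) a
  have hu : IsUnit u := (isUnit_iff_toZMod u).2 ha0
  refine ⟨hu.unit, ?_⟩
  rintro ⟨ρ, ⟨hρ, -⟩, w, hw⟩
  obtain ⟨c0, s, rfl⟩ := exists_PolD n c ρ hρ
  rw [norm_io_PolD n c hc] at hw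
  have hw' : (MatD n (Fp n c) c0 s).det = u * (w : ℤ_[p]) ^ 2 := by
    apply FaithfulSMul.algebraMap_injective ℤ_[p] ℚ_[p]
    rw [hw]
    simp [PadicInt.algebraMap_apply]
  have h1 := det_eq_norm n G hGd hG0 c0 s
  rw [hG, Polynomial.map_mul, Polynomial.map_mul, map_C, norm_mk_mul, norm_mk_C, norm_mk_mul, one_mul] at h1
  rotate_left
  · exact map_Q_ne_zero H hH0
  · exact map_Q_ne_zero H hH0
  · exact (map_ne_zero_iff _ (FaithfulSMul.algebraMap_injective _ _)).2 hk0
  · exact C_ne_zero.2 ((map_ne_zero_iff _ (FaithfulSMul.algebraMap_injective _ _)).2 hk0)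
  · exact mul_ne_zero (map_Q_ne_zero H hH0) (map_Q_ne_zero H hH0)
  rw [← hG] at h1
  set y := Algebra.norm ℚ_[p] (AdjoinRoot.mk (H.map (algebraMap ℤ_[p] ℚ_[p]))
        ((PolD n G c0 s).map (algebraMap ℤ_[p] ℚ_[p])))
  have hy : ‖y‖ ≤ 1 := by
    have h2 : ‖y‖ * ‖y‖ ≤ 1 := by
      rw [← norm_mul, ← h1, PadicInt.algebraMap_apply]
      exact PadicInt.norm_le_one _
    nlinarith [norm_nonneg y]
  obtain ⟨Y, hY⟩ : ∃ Y : ℤ_[p], algebraMap ℤ_[p] ℚ_[p] Y = y := ⟨⟨y, hy⟩, rfl⟩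
  have h3 : (MatD n G c0 s).det = Y * Y := by
    apply FaithfulSMul.algebraMap_injective ℤ_[p] ℚ_[p]
    rw [h1, map_mul, hY]
  have h4 := det_red_eq n _ _ hGm c0 s
  rw [hw', h3, map_mul, map_mul, map_pow] at h4
  have hw0 := (isUnit_iff_toZMod (w : ℤ_[p])).1 w.isUnit
  apply ha
  refine ⟨PadicInt.toZMod Y / PadicInt.toZMod (w : ℤ_[p]), ?_⟩
  field_simp
  rw [h4, pow_two]

end Padic

theorem odd_factor {k : Type*} [Field k] (N : ℕ) : ∀ f : k[X], f ≠ 0 → f.natDegree ≤ N →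
    (∃ κ : kˣ, ∃ h : k[X], f = C (κ : k) * h ^ 2) ∨
    ∃ (g h : k[X]) (e : ℕ), g.Monic ∧ Irreducible g ∧ Odd e ∧ f = g ^ e * h ∧ ¬ g ∣ h := by
  induction N with
  | zero =>
    intro f hf hd
    left
    rw [eq_C_of_natDegree_le_zero hd] at hf ⊢
    exact ⟨Units.mk0 _ (C_ne_zero.1 hf), 1, by simp⟩
  | succ N ih =>
    intro f hf hd
    by_cases hu : IsUnit f
    · obtain ⟨a, ha, rfl⟩ := Polynomial.isUnit_iff.1 hu
      exact Or.inl ⟨ha.unit, 1, by simp⟩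
    obtain ⟨g, hg, hgi, hgf⟩ := exists_monic_irreducible_factor f hu
    obtain ⟨e, h, hgh, hfe⟩ := (FiniteMultiplicity.of_not_isUnit hgi.not_isUnit hf).exists_eq_pow_mul_and_not_dvd
      |> fun ⟨h, h1, h2⟩ => (⟨_, h, h2, h1⟩ : ∃ e h, ¬ g ∣ h ∧ f = g ^ e * h)
    rcases Nat.even_or_odd e with ⟨j, rfl⟩ | ho
    swap
    · exact Or.inr ⟨g, h, e, hg, hgi, ho, hfe, hgh⟩
    have hh0 : h ≠ 0 := by rintro rfl; exact hgh (dvd_zero _)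
    have hgp : 0 < g.natDegree := hgi.natDegree_pos
    have hj : j ≠ 0 := by
      rintro rfl
      rw [hfe] at hgf
      simp at hgf
      exact hgh hgf
    have hd2 : h.natDegree ≤ N := by
      rw [hfe, natDegree_mul (pow_ne_zero _ hg.ne_zero) hh0, natDegree_pow] at hd
      have : 1 * 1 ≤ (j + j) * g.natDegree := Nat.mul_le_mul (by omega) hgp
      omega
    rcases ih h hh0 hd2 with ⟨κ, q, hq⟩ | ⟨g', h', e', m1, m2, m3, m4, m5⟩
    · left
      refine ⟨κ, g ^ j * q, ?_⟩
      rw [hfe, hq]; ring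
    · right
      refine ⟨g', g ^ (j + j) * h', e', m1, m2, m3, ?_, ?_⟩
      · rw [hfe, m4]; ring
      · intro hdv
        rcases m2.prime.dvd_or_dvd hdv with h1 | h1
        · have h2 := m2.prime.dvd_of_dvd_pow h1
          have h3 : g ∣ g' := (m2.dvd_symm hgi h2)
          apply hgh
          rw [m4]
          exact (h3.trans (dvd_pow_self g' m3.pos.ne')).mul_right h'
        · exact m5 h1

/-- The form `g^e h` and the element `1 + h b`. -/
theorem PolD_special {A : Type*} [CommRing A] [Nontrivial A] (n e : ℕ) (g h b : A[X]) (hg : g.Monic)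
    (he : e ≠ 0) (hd : h.natDegree + e * g.natDegree = n) (hb : b.degree < g.degree) :
    PolD n (g ^ e * h) 1 (fun k => ((X ^ n * b) /ₘ g ^ e).coeff (n - (k + 1))) = 1 + h * b := by
  set q := (X ^ n * b) /ₘ g ^ e with hq
  set r := (X ^ n * b) %ₘ g ^ e with hr
  have hge : (g ^ e).Monic := hg.pow e
  have hqr : r + g ^ e * q = X ^ n * b := modByMonic_add_div _ _
  have hrd : r.degree < (g ^ e).degree := degree_modByMonic_lt _ hge
  have hge' : (g ^ e).natDegree = e * g.natDegree := hg.natDegree_pow e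
  have e1 : g ^ e * h * q = X ^ n * (h * b) - h * r := by
    linear_combination h * hqr
  have hhr : W n (h * r) = 0 := by
    apply W_eq_zero
    by_cases hr0 : r = 0
    · rw [hr0, mul_zero, degree_zero]; exact WithBot.bot_lt_coe _
    have hh1 : h.degree ≤ (h.natDegree : WithBot ℕ) := degree_le_natDegree
    have hr1 : r.natDegree < e * g.natDegree := by
      rw [← hge']; exact natDegree_lt_natDegree hr0 hrd
    refine lt_of_le_of_lt degree_le_natDegree ?_
    have : (h * r).natDegree ≤ h.natDegree + r.natDegree := natDegree_mul_le
    exact_mod_cast (show (h * r).natDegree < n by omega)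
  have hq0 : W n q = 0 := by
    apply W_eq_zero
    by_cases hb0 : b = 0
    · rw [hq, hb0, mul_zero, zero_divByMonic, degree_zero]; exact WithBot.bot_lt_coe _
    have hb1 : b.natDegree < g.natDegree := natDegree_lt_natDegree hb0 hb
    have hXb : (X ^ n * b).natDegree ≤ n + b.natDegree := by
      refine natDegree_mul_le.trans ?_
      rw [natDegree_X_pow]
    have hq1 : q.natDegree = (X ^ n * b).natDegree - (g ^ e).natDegree := natDegree_divByMonic _ hge
    refine lt_of_le_of_lt degree_le_natDegree ?_
    have h1 : 1 * g.natDegree ≤ e * g.natDegree := Nat.mul_le_mul (by omega) le_rfl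
    exact_mod_cast (show q.natDegree < n by omega)
  have e2 := W_mul n (g ^ e * h) q
  rw [hq0, mul_zero, add_zero, e1, map_sub, W_X_pow_mul, hhr, sub_zero] at e2
  rw [PolD, C_1, e2, ← Finset.sum_range_reflect]
  congr 1
  refine Finset.sum_congr rfl fun i hi => ?_
  have := Finset.mem_range.1 hi
  rw [show n - (n - 1 - i + 1) = i by omega, show n - 1 - i + 1 = n - i by omega]

section Padic
variable {p : ℕ} [Fact p.Prime]

theorem hit_of_not_evenRam (hp : 2 < p) (n : ℕ) (c : ℕ → ℤ_[p]) (hc : c 0 ≠ 0) (h0 : PrimP p n c)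
    (hE : ¬ EvenRamP p n c) (u : ℤ_[p]ˣ) : Hit p n c u := by
  rcases Nat.even_or_odd n with ⟨m, hm⟩ | ho
  swap
  · exact hit_odd n ho c hc u
  have hf := red_ne_zero n c h0
  have hfd := red_natDegree_le n c
  rcases odd_factor n _ hf hfd with ⟨κ, h, hh⟩ | ⟨g, h, e, hg, hgi, he, hfe, hgh⟩
  · subst hm
    exact absurd (evenRam_of m c κ h hh) hE
  have hh0 : h ≠ 0 := by rintro rfl; exact hgh (dvd_zero _)
  have he0 : e ≠ 0 := he.pos.ne'
  rw [hfe, natDegree_mul (pow_ne_zero _ hg.ne_zero) hh0, natDegree_pow] at hfd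
  set uu := PadicInt.toZMod (u : ℤ_[p]) with huu
  have huu0 : uu ≠ 0 := (isUnit_iff_toZMod (u : ℤ_[p])).1 u.isUnit
  -- choose b
  obtain ⟨b, hbg, hb⟩ : ∃ b : (ZMod p)[X], b.degree < g.degree ∧
      Algebra.norm (ZMod p) (AdjoinRoot.mk g (1 + h * b)) = uu := by
    haveI : Fact (Irreducible g) := ⟨hgi⟩
    haveI : Module.Finite (ZMod p) (AdjoinRoot g) := (AdjoinRoot.powerBasis hg.ne_zero).finite
    haveI : Finite (AdjoinRoot g) := Module.finite_of_finite (ZMod p)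
    obtain ⟨a, ha⟩ := FiniteField.norm_surjective (ZMod p) (AdjoinRoot g) uu
    have hh1 : AdjoinRoot.mk g h ≠ 0 := by rwa [Ne, AdjoinRoot.mk_eq_zero]
    obtain ⟨b, hb⟩ := AdjoinRoot.mk_surjective ((a - 1) / AdjoinRoot.mk g h)
    refine ⟨b %ₘ g, degree_modByMonic_lt _ hg, ?_⟩
    have : AdjoinRoot.mk g (b %ₘ g) = AdjoinRoot.mk g b := by
      rw [AdjoinRoot.mk_eq_mk]
      refine ⟨-(b /ₘ g), ?_⟩
      linear_combination modByMonic_add_div b g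
    rw [map_add, map_mul, this, hb, map_one, mul_div_cancel₀ _ hh1, add_sub_cancel, ha]
  -- lifts
  have hsurj := ZMod.ringHom_surjective (PadicInt.toZMod (p := p))
  obtain ⟨G, hGm, hGd, hG⟩ := lifts_and_natDegree_eq_and_monic (mem_lifts_of_surjective hsurj g) hg
  obtain ⟨H, hHm, hHd, hH0⟩ := exists_lift_s14 h (n - e * g.natDegree) (by omega)
  obtain ⟨B, hBm, hBd⟩ := exists_degree_eq_of_mem_lifts (mem_lifts_of_surjective hsurj b)
  have hBG : B.degree < G.degree := by
    rw [hBd, degree_eq_natDegree hG.ne_zero, hGd, ← degree_eq_natDegree hg.ne_zero]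
    exact hbg
  have hGe0 : G ^ e ≠ 0 := (hG.pow e).ne_zero
  have hdeg : H.natDegree + e * G.natDegree = n := by rw [hHd, hGd]; omega
  set F1 := G ^ e * H with hF1
  have hF10 : F1 ≠ 0 := mul_ne_zero hGe0 hH0
  have hF1d : F1.natDegree = n := by
    rw [hF1, natDegree_mul hGe0 hH0, natDegree_pow, add_comm, hdeg]
  have hF1m : (Fp n c).map PadicInt.toZMod = F1.map PadicInt.toZMod := by
    rw [hfe, hF1, Polynomial.map_mul, Polynomial.map_pow, hGm, hHm]
  have hP := PolD_special n e G H B hG he0 hdeg hBG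
  rw [← hF1] at hP
  set s : ℕ → ℤ_[p] := fun k => ((X ^ n * B) /ₘ G ^ e).coeff (n - (k + 1))
  have hdet := det_eq_norm n F1 hF1d hF10 1 s
  rw [hP, hF1, Polynomial.map_mul, Polynomial.map_pow, norm_mk_mul, norm_mk_pow] at hdet
  rotate_left
  · exact map_Q_ne_zero G hG.ne_zero
  · exact pow_ne_zero _ (map_Q_ne_zero G hG.ne_zero)
  · exact map_Q_ne_zero H hH0
  have hone : AdjoinRoot.mk (H.map (algebraMap ℤ_[p] ℚ_[p]))
      ((1 + H * B).map (algebraMap ℤ_[p] ℚ_[p])) = 1 := by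
    rw [Polynomial.map_add, Polynomial.map_mul, Polynomial.map_one, map_add, map_mul,
      AdjoinRoot.mk_self, zero_mul, add_zero, map_one]
  rw [hone, map_one, mul_one, norm_mk_map _ G hG, ← map_pow] at hdet
  have hdet' := FaithfulSMul.algebraMap_injective ℤ_[p] ℚ_[p] hdet
  rw [← hF1] at hdet'
  have hred := norm_mk_map (PadicInt.toZMod (p := p)) G hG (1 + H * B)
  rw [hGm, Polynomial.map_add, Polynomial.map_mul, Polynomial.map_one, hHm, hBm, hb] at hred
  have hfin := det_red_eq n _ _ hF1m 1 s
  rw [hdet', map_pow, ← hred] at hfin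
  obtain ⟨j, rfl⟩ := he
  refine hit_of_det n c hc u 1 s (unit_sq_of_odd hp _ u (uu ^ j) (pow_ne_zero _ huu0) ?_)
  rw [hfin]
  ring

end Padic

/-- Lemma 3.5: surjectivity of the norm map
`R_F^×/(R_F^×)² → ℤ_p^×/(ℤ_p^×)²`. -/
theorem norm_map_surjectivity
    (p : ℕ) [Fact p.Prime]
    (n : ℕ) (hn : 3 ≤ n) (c : ℕ → ℤ_[p]) (hf0 : c 0 ≠ 0)
    (hsep : SepDegP p n c) (hprim : PrimP p n c) :
    (2 < p →
      ((∀ u : ℤ_[p]ˣ, ∃ ρ : KF ℤ_[p] ℚ_[p] n c, IsUnitRF ℤ_[p] ℚ_[p] n c ρ ∧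
          ∃ w : ℤ_[p]ˣ, Algebra.norm ℚ_[p] ρ =
            (((u : ℤ_[p]) : ℚ_[p])) * (((w : ℤ_[p]) : ℚ_[p])) ^ 2) ↔
        ¬ EvenRamP p n c)) ∧
    (p = 2 → IsMaxOrder ℤ_[p] ℚ_[p] n c → ¬ EvenRamP p n c →
      ∀ u : ℤ_[p]ˣ, ∃ ρ : KF ℤ_[p] ℚ_[p] n c, IsUnitRF ℤ_[p] ℚ_[p] n c ρ ∧
        ∃ w : ℤ_[p]ˣ, Algebra.norm ℚ_[p] ρ =
          (((u : ℤ_[p]) : ℚ_[p])) * (((w : ℤ_[p]) : ℚ_[p])) ^ 2) := by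
  refine ⟨fun hp => ⟨fun hall hE => ?_, fun hE u => hit_of_not_evenRam hp n c hf0 hprim hE u⟩, ?_⟩
  · obtain ⟨u, hu⟩ := not_hit_of_evenRam hp n c hf0 hprim hE
    exact hu (hall u)
  · intro h2 _ hE u
    subst h2
    exact hit_two n c hf0 hprim hE u


end BHS
end
end
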